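/- Let ω ⊂ ℝ² be a bounded, connected, open set with Lipschitz boundary, Ω = ω × (−1/2,1/2). Let f: ω × (−1/2,1/2) × [1,∞) × ℝ^{3×3} → [0,∞) satisfy: f(x_α,·,·,·) continuous for a.e. x_α, f(·,y,q,ξ) measurable for every (y,q,ξ), and C₁|ξ|^q − 1/C₁ ≤ f(x_α,y,q,ξ) ≤ C₂(|ξ|^q+1) with 0 < C₁ ≤ C₂. Let p ∈ 𝒫_b(Ω), εₖ → 0⁺, p_{εₖ}(x) := p(x_α,εₖx₃), and assume p_{εₖ} → p₀ in L¹(Ω) with p₀ ∈ 𝒫_b^{log}(ω). Then Γ(L^{p₀(·)})-limsup_{k→∞} F_{εₖ} ≤ F, where F(u) := ∫_ω f₀(x_α, 0, p₀(x_α), ∇_α u(x_α)) dx_α if u ∈ W^{1,p₀(·)}_0(ω;ℝ³) and +∞ otherwise in L¹(Ω;ℝ³), with f₀(x_α,y,q,ξ_α) := inf_{ξ₃∈ℝ³} f(x_α,y,q,ξ_α,ξ₃). Equivalently, for every u ∈ W^{1,p₀(·)}_0(ω;ℝ³) there exists a sequence u_k → u in L^{p₀(·)}(Ω;ℝ³)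 with limsup_{k→∞} F_{εₖ}(u_k) ≤ F(u). -/

import Mathlib

/-!
Fix `u`, identified with a planar map `v`, of finite limit energy. The recovery sequence is the
classical thin-film ansatz `u_k = φ(x_α) + ε_k x₃ b(x_α)` (`recov`), with `φ`, `b` smooth and
compactly supported in `ω`. It is admissible because it vanishes near the lateral boundary
(`sobAdm_of_smooth`), and its rescaled gradient is `(∇φ + ε_k x₃ ∇b | b)`. Since
`p_{ε_k} → p₀` in `L¹`, every subsequence has a further one along which the exponents converge a.e.;
everything being bounded, dominated convergence shows that the energies tend to
`∫_ω f(x_α, 0, p₀, (∇φ | b))` (`energy_recov`), while `u_k` stays as close to `u` in the modular of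
`p₀` as `φ` is to `v` (`modular_recov`).

It remains to choose `φ` close to `v` and `b` so that this integral is close to
`∫_ω f₀(x_α, 0, p₀, ∇v)` (`exists_planar_approx`). A near-minimiser of `f(x_α, 0, p₀, (∇v | ·))` is
chosen measurably among finitely many members of a dense sequence (`exists_measurable_selection`,
`iInf_dense_le_ofReal_iInf`), hence is bounded, and it is an a.e. limit of uniformly bounded test
functions. The map `v` is approximated by test functions in `W^{1,p₀(·)}`
(`exists_smooth_approx`): elements of `W^{1,p₀(·)}_0` are limits of compactly supported Sobolev
maps, and those can be mollified. Mollification converges in the variable-exponent modular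
because of the log-Hölder condition: with `h = |g|^{p₀}`, the pointwise bound
`|ρ_k * g|^{p₀} ≤ K (1 + ρ_k * h)` replaces Jensen's inequality (`moll_rpow_bound`), and
`ρ_k * h → h` in `L¹` supplies a dominating sequence (`moll_modular`). The growth condition on `f`
then lets one pass to the limit in the energies (`limsup_lintegral_le_of_dominated`).

The integrand is replaced throughout by one that is continuous in `(y, q, ξ)` for every `x_α`
(`exists_caratheodory`), which makes it jointly measurable. A diagonal selection
(`exists_diagonal`) over better and better pairs `(φ, b)` yields a single recovery sequence.
-/

open MeasureTheory Filter Topology Set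
open scoped ENNReal NNReal

noncomputable section

/-- `ℝ^n` as a Euclidean space. -/
abbrev Euc (n : ℕ) := EuclideanSpace ℝ (Fin n)

/-- `d × n` real matrices (gradients of maps `ℝ^n → ℝ^d`). -/
abbrev Mat (d n : ℕ) := Fin d → Fin n → ℝ

/-- Euclidean (Frobenius) norm of a matrix. -/
def mnorm {d n : ℕ} (ξ : Mat d n) : ℝ := Real.sqrt (∑ i, ∑ j, (ξ i j)^2)

/-- `G` is a weak (distributional) gradient of `v` on the open set `Ω`. -/
def IsWeakGrad {n d : ℕ} (Ω : Set (Euc n)) (v : Euc n → Euc d) (G : Euc n → Mat d n) : Prop :=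
  ∀ φ : Euc n → ℝ, ContDiff ℝ (⊤ : ℕ∞) φ → HasCompactSupport φ → tsupport φ ⊆ Ω →
    ∀ i : Fin d, ∀ j : Fin n,
      ∫ x in Ω, φ x * G x i j = - ∫ x in Ω, (fderiv ℝ φ x (EuclideanSpace.single j 1)) * v x i

/-- Membership in `W^{1,1}(Ω;ℝ^d)` with weak gradient `G`. -/
def MemW11 {n d : ℕ} (Ω : Set (Euc n)) (v : Euc n → Euc d) (G : Euc n → Mat d n) : Prop :=
  IntegrableOn v Ω ∧ (∀ i j, IntegrableOn (fun x => G x i j) Ω) ∧ IsWeakGrad Ω v G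

/-- The open unit cube `(-1/2,1/2)^n`. -/
def unitCube (n : ℕ) : Set (Euc n) := {x | ∀ j, |x j| < 1/2}

/-- Matrix of partial derivatives of a map `ℝ^n → ℝ^d`. -/
def gradMat {n d : ℕ} (φ : Euc n → Euc d) (x : Euc n) : Mat d n :=
  fun i j => fderiv ℝ φ x (EuclideanSpace.single j 1) i

/-- Quasiconvexity of `g : ℝ^{d×n} → ℝ`. -/
def QuasiconvexFn {d n : ℕ} (g : Mat d n → ℝ) : Prop :=
  ∀ ξ : Mat d n, ∀ φ : Euc n → Euc d, ContDiff ℝ (⊤ : ℕ∞) φ → tsupport φ ⊆ unitCube n →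
    g ξ ≤ ∫ x in unitCube n, g (fun i j => ξ i j + gradMat φ x i j)

/-- The quasiconvex envelope: the greatest quasiconvex function below `g`. -/
def qcEnvelope {d n : ℕ} (g : Mat d n → ℝ) (ξ : Mat d n) : ℝ :=
  sSup {t : ℝ | ∃ h : Mat d n → ℝ, QuasiconvexFn h ∧ (∀ η, h η ≤ g η) ∧ t = h ξ}

/-- The modular `∫_Ω f(x)^{p(x)} dx`, valued in `ℝ≥0∞`. -/
def emod {n : ℕ} (Ω : Set (Euc n)) (p : Euc n → ℝ) (f : Euc n → ℝ) : ℝ≥0∞ :=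
  ∫⁻ x in Ω, ENNReal.ofReal (f x ^ p x)

/-- Convergence `p_k → p₀` in `L^∞(Ω)`. -/
def TendstoLinf {n : ℕ} (Ω : Set (Euc n)) (p : ℕ → Euc n → ℝ) (p₀ : Euc n → ℝ) : Prop :=
  Tendsto (fun k => eLpNorm (fun x => p k x - p₀ x) ⊤ (volume.restrict Ω)) atTop (nhds 0)

/-- Convergence `p_k → p₀` in `L¹(Ω)`. -/
def TendstoL1 {n : ℕ} (Ω : Set (Euc n)) (p : ℕ → Euc n → ℝ) (p₀ : Euc n → ℝ) : Prop :=
  Tendsto (fun k => ∫⁻ x in Ω, ENNReal.ofReal |p k x - p₀ x|) atTop (nhds 0)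

/-- Strong `L¹(Ω;ℝ^d)` convergence of vector valued maps. -/
def TendstoL1V {n d : ℕ} (Ω : Set (Euc n)) (v : ℕ → Euc n → Euc d) (v₀ : Euc n → Euc d) : Prop :=
  Tendsto (fun k => ∫⁻ x in Ω, ENNReal.ofReal ‖v k x - v₀ x‖) atTop (nhds 0)

/-- Weak `L¹(Ω;ℝ^d)` convergence (testing against bounded measurable functions). -/
def WeakL1Tendsto {n d : ℕ} (Ω : Set (Euc n)) (v : ℕ → Euc n → Euc d) (v₀ : Euc n → Euc d) : Prop :=
  ∀ g : Euc n → ℝ, Measurable g → (∃ M, ∀ x, |g x| ≤ M) →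
    ∀ i : Fin d, Tendsto (fun k => ∫ x in Ω, g x * v k x i) atTop (nhds (∫ x in Ω, g x * v₀ x i))

/-- Weak `L^r(A)` convergence of scalar functions (testing against `L^{r'}` functions). -/
def WeakLrTendsto {n : ℕ} (A : Set (Euc n)) (r : ℝ) (F : ℕ → Euc n → ℝ) (F₀ : Euc n → ℝ) : Prop :=
  ∀ g : Euc n → ℝ, Measurable g → (∫⁻ x in A, ENNReal.ofReal (|g x| ^ (r / (r - 1)))) < ⊤ →
    Tendsto (fun k => ∫ x in A, g x * F k x) atTop (nhds (∫ x in A, g x * F₀ x))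

/-- The class `𝒫_b(Ω)`: measurable exponents with `1 < p⁻ ≤ p⁺ < ∞`. -/
def IsPb {n : ℕ} (Ω : Set (Euc n)) (p : Euc n → ℝ) : Prop :=
  Measurable p ∧ ∃ pm pM : ℝ, 1 < pm ∧ ∀ᵐ x ∂(volume.restrict Ω), pm ≤ p x ∧ p x ≤ pM

/-- log-Hölder continuity on `A`. -/
def LogHolder {n : ℕ} (A : Set (Euc n)) (p : Euc n → ℝ) : Prop :=
  ∃ γ > 0, ∀ x ∈ A, ∀ y ∈ A, 0 < dist x y → dist x y < 1/2 →
    |p x - p y| ≤ γ / |Real.log (dist x y)|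

/-- The class `𝒫_b^{log}(A)`. -/
def IsPbLog {n : ℕ} (A : Set (Euc n)) (p : Euc n → ℝ) : Prop := IsPb A p ∧ LogHolder A p

/-- `p₀ ∈ L^∞(Ω)`. -/
def MemLinf {n : ℕ} (Ω : Set (Euc n)) (p : Euc n → ℝ) : Prop :=
  Measurable p ∧ ∃ M : ℝ, ∀ᵐ x ∂(volume.restrict Ω), |p x| ≤ M

/-- Update the `i`-th coordinate of a point of `ℝ^n`. -/
def updCoord {n : ℕ} (y : Euc n) (i : Fin n) (t : ℝ) : Euc n :=
  (WithLp.equiv 2 _).symm (Function.update ((WithLp.equiv 2 _) y) i t)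

/-- `s` has Lipschitz boundary: near every boundary point, in suitable orthonormal
coordinates, `s` is the open region above the graph of a Lipschitz function. -/
def HasLipschitzBoundary {n : ℕ} (s : Set (Euc n)) : Prop :=
  ∀ x ∈ frontier s, ∃ U : Set (Euc n), IsOpen U ∧ x ∈ U ∧
    ∃ (e : Euc n ≃ₗᵢ[ℝ] Euc n) (i₀ : Fin n) (f : Euc n → ℝ) (K : NNReal),
      LipschitzWith K f ∧ (∀ y t, f (updCoord y i₀ t) = f y) ∧
      s ∩ U = {y ∈ U | f (e y) < e y i₀}

/-- `A` compactly contained in `Ω`. -/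
def CompactlyIn {n : ℕ} (A Ω : Set (Euc n)) : Prop :=
  IsOpen A ∧ IsCompact (closure A) ∧ closure A ⊆ Ω

/-- Weak `L¹(Ω)` convergence of scalar functions. -/
def WeakL1TendstoS {n : ℕ} (Ω : Set (Euc n)) (F : ℕ → Euc n → ℝ) (F₀ : Euc n → ℝ) : Prop :=
  ∀ g : Euc n → ℝ, Measurable g → (∃ M, ∀ x, |g x| ≤ M) →
    Tendsto (fun k => ∫ x in Ω, g x * F k x) atTop (nhds (∫ x in Ω, g x * F₀ x))

/-- Strong (modular) convergence in the variable exponent space `L^{q(·)}(Ω;ℝ^d)`. -/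
def TendstoModular {n d : ℕ} (Ω : Set (Euc n)) (q : Euc n → ℝ)
    (us : ℕ → Euc n → Euc d) (u : Euc n → Euc d) : Prop :=
  Tendsto (fun k => ∫⁻ x in Ω, ENNReal.ofReal (‖us k x - u x‖ ^ q x)) atTop (nhds 0)
/-- Planar projection `x ↦ x_α = (x₁,x₂)`. -/
def projα (x : Euc 3) : Euc 2 := (WithLp.equiv 2 _).symm ![x 0, x 1]

/-- Embed `(x_α, y) ∈ ℝ² × ℝ` into `ℝ³`. -/
def embed3 (xα : Euc 2) (y : ℝ) : Euc 3 := (WithLp.equiv 2 _).symm ![xα 0, xα 1, y]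

/-- The rescaled thin domain `Ω = ω × (-1/2,1/2)`. -/
def thinDomain (ω : Set (Euc 2)) : Set (Euc 3) :=
  {x | projα x ∈ ω ∧ x 2 ∈ Set.Ioo (-(1/2) : ℝ) (1/2)}

/-- The lateral boundary `∂_L Ω = ∂ω × (-1/2,1/2)`. -/
def latBoundary (ω : Set (Euc 2)) : Set (Euc 3) :=
  {x | projα x ∈ frontier ω ∧ x 2 ∈ Set.Ioo (-(1/2) : ℝ) (1/2)}

/-- The rescaling `x ↦ (x_α, ε x₃)`. -/
def scaleX (ε : ℝ) (x : Euc 3) : Euc 3 := updCoord x 2 (ε * x 2)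

/-- Divide the third column of a `3×3` matrix by `ε` (the scaled gradient `(∇_α u, ε⁻¹∇₃u)`). -/
def scaleCol (ε : ℝ) (ξ : Mat 3 3) : Mat 3 3 := fun i j => if j = 2 then ξ i j / ε else ξ i j

/-- Assemble `ξ = (ξ_α, ξ₃) ∈ ℝ^{3×3}` from `ξ_α ∈ ℝ^{3×2}` and `ξ₃ ∈ ℝ³`. -/
def joinCols (ξα : Mat 3 2) (ξ₃ : Fin 3 → ℝ) : Mat 3 3 :=
  fun i j => if h : (j : ℕ) < 2 then ξα i ⟨j, h⟩ else ξ₃ i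

/-- `f₀(x_α,y,q,ξ_α) = inf_{ξ₃ ∈ ℝ³} f(x_α,y,q,(ξ_α,ξ₃))`. -/
def finf (f : Euc 2 → ℝ → ℝ → Mat 3 3 → ℝ) (xα : Euc 2) (y q : ℝ) (ξα : Mat 3 2) : ℝ :=
  ⨅ ξ₃ : Fin 3 → ℝ, f xα y q (joinCols ξα ξ₃)

/-- `p⁻ = ess inf_Ω p`. -/
def pminus (ω : Set (Euc 2)) (p : Euc 3 → ℝ) : ℝ := essInf p (volume.restrict (thinDomain ω))

/-- Membership in `W^{1,r}_{0,∂_LΩ}(Ω;ℝ³)`: closure in `W^{1,r}(Ω)` of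
`W^{1,r}_loc(ℝ³;ℝ³)` maps vanishing in a neighbourhood of the lateral boundary. -/
def MemLatZero (ω : Set (Euc 2)) (r : ℝ) (u : Euc 3 → Euc 3) (G : Euc 3 → Mat 3 3) : Prop :=
  ∃ (w : ℕ → Euc 3 → Euc 3) (Gw : ℕ → Euc 3 → Mat 3 3),
    (∀ j, IsWeakGrad Set.univ (w j) (Gw j)) ∧
    (∀ j, LocallyIntegrable (w j) volume) ∧
    (∀ j, ∀ i l, LocallyIntegrable (fun x => Gw j x i l) volume) ∧
    (∀ j, ∃ V : Set (Euc 3), IsOpen V ∧ latBoundary ω ⊆ V ∧ ∀ x ∈ V, w j x = 0) ∧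
    Tendsto (fun j => (∫⁻ x in thinDomain ω, (ENNReal.ofReal (‖w j x - u x‖ ^ r)
        + ENNReal.ofReal (mnorm (fun i l => Gw j x i l - G x i l) ^ r)))) atTop (nhds 0)

/-- `u` belongs to `W^{1,p_ε(·)}_L(Ω;ℝ³) = W^{1,p⁻}_{0,∂_LΩ}(Ω;ℝ³) ∩ W^{1,p_ε(·)}(Ω;ℝ³)`,
with weak gradient `G`. -/
def SobAdm (ω : Set (Euc 2)) (p : Euc 3 → ℝ) (ε : ℝ) (u : Euc 3 → Euc 3)
    (G : Euc 3 → Mat 3 3) : Prop :=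
  AEStronglyMeasurable u (volume.restrict (thinDomain ω)) ∧
  (∀ i j, AEMeasurable (fun x => G x i j) (volume.restrict (thinDomain ω))) ∧
  IsWeakGrad (thinDomain ω) u G ∧
  MemLatZero ω (pminus ω p) u G ∧
  emod (thinDomain ω) (fun x => p (scaleX ε x)) (fun x => ‖u x‖) < ⊤ ∧
  emod (thinDomain ω) (fun x => p (scaleX ε x)) (fun x => mnorm (G x)) < ⊤

/-- The clamped thin-film functional
`F_ε(u) = ∫_Ω f(x_α, εx₃, p_ε(x), ∇_α u, ε⁻¹ ∇₃ u) dx` on `W^{1,p_ε(·)}_L(Ω;ℝ³)`,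
`+∞` otherwise; encoded through the (a.e. unique) weak gradient. -/
def Feps (ω : Set (Euc 2)) (p : Euc 3 → ℝ)
    (f : Euc 2 → ℝ → ℝ → Mat 3 3 → ℝ) (ε : ℝ) (u : Euc 3 → Euc 3) : ℝ≥0∞ :=
  ⨅ (G : Euc 3 → Mat 3 3) (_ : SobAdm ω p ε u G),
    ∫⁻ x in thinDomain ω, ENNReal.ofReal
      (f (projα x) (ε * x 2) (p (scaleX ε x)) (scaleCol ε (G x)))

/-- Membership in `W^{1,q(·)}(ω;ℝ³)` for the planar domain, with weak gradient `Gv`. -/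
def MemW1pPlanar (ω : Set (Euc 2)) (q : Euc 2 → ℝ) (v : Euc 2 → Euc 3)
    (Gv : Euc 2 → Mat 3 2) : Prop :=
  AEStronglyMeasurable v (volume.restrict ω) ∧
  (∀ i j, AEMeasurable (fun x => Gv x i j) (volume.restrict ω)) ∧
  IsWeakGrad ω v Gv ∧
  emod ω q (fun x => ‖v x‖) < ⊤ ∧ emod ω q (fun x => mnorm (Gv x)) < ⊤

/-- Membership in `W^{1,q(·)}_0(ω;ℝ³)`: closure in `W^{1,q(·)}(ω)` of compactly
supported Sobolev functions. -/
def MemW1p0Planar (ω : Set (Euc 2)) (q : Euc 2 → ℝ) (v : Euc 2 → Euc 3)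
    (Gv : Euc 2 → Mat 3 2) : Prop :=
  MemW1pPlanar ω q v Gv ∧
  ∃ (w : ℕ → Euc 2 → Euc 3) (Gw : ℕ → Euc 2 → Mat 3 2),
    (∀ j, MemW1pPlanar ω q (w j) (Gw j) ∧ HasCompactSupport (w j) ∧ tsupport (w j) ⊆ ω) ∧
    Tendsto (fun j => ∫⁻ x in ω, (ENNReal.ofReal (‖w j x - v x‖ ^ q x)
        + ENNReal.ofReal (mnorm (fun i l => Gw j x i l - Gv x i l) ^ q x))) atTop (nhds 0)

/-- The limiting planar functional with density `g`, on `W^{1,q(·)}_0(ω;ℝ³)`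
(identified with `x₃`-independent maps on `Ω`), `+∞` otherwise in `L¹(Ω;ℝ³)`. -/
def limFun (ω : Set (Euc 2)) (q : Euc 2 → ℝ) (g : Euc 2 → Mat 3 2 → ℝ)
    (u : Euc 3 → Euc 3) : ℝ≥0∞ :=
  ⨅ (v : Euc 2 → Euc 3) (Gv : Euc 2 → Mat 3 2)
    (_ : MemW1p0Planar ω q v Gv ∧
         ∀ᵐ x ∂(volume.restrict (thinDomain ω)), u x = v (projα x)),
    ∫⁻ xα in ω, ENNReal.ofReal (g xα (Gv xα))

/-- `p_ε → p₀` (as functions on `Ω`, `p₀` planar) in `L¹(Ω)` as `ε → 0⁺`. -/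
def ScaledTendstoL1 (ω : Set (Euc 2)) (p : Euc 3 → ℝ) (p₀ : Euc 2 → ℝ) : Prop :=
  Tendsto (fun ε : ℝ => ∫⁻ x in thinDomain ω, ENNReal.ofReal |p (scaleX ε x) - p₀ (projα x)|)
    (nhdsWithin 0 (Set.Ioi 0)) (nhds 0)

/-- `p_ε → p₀` in `L^∞(Ω)` as `ε → 0⁺`. -/
def ScaledTendstoLinf (ω : Set (Euc 2)) (p : Euc 3 → ℝ) (p₀ : Euc 2 → ℝ) : Prop :=
  Tendsto (fun ε : ℝ =>
      eLpNorm (fun x => p (scaleX ε x) - p₀ (projα x)) ⊤ (volume.restrict (thinDomain ω)))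
    (nhdsWithin 0 (Set.Ioi 0)) (nhds 0)

/-! ### Limits of integrals and measurable selection -/

/-- A domination principle for upper limits of integrals: the dominating functions `B + E n` may
vary with `n` as long as the error `E n` tends to `0` in `L¹`. -/
lemma limsup_lintegral_le_of_dominated {α : Type*} [MeasurableSpace α] {μ : Measure α}
    {F E : ℕ → α → ℝ≥0∞} {F' B : α → ℝ≥0∞}
    (hF : ∀ n, AEMeasurable (F n) μ) (hB : AEMeasurable B μ)
    (hle : ∀ n, ∀ᵐ x ∂μ, F n x ≤ B x + E n x)
    (hB' : ∫⁻ x, B x ∂μ ≠ ⊤)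
    (hE : Tendsto (fun n => ∫⁻ x, E n x ∂μ) atTop (𝓝 0))
    (hlim : ∀ᵐ x ∂μ, Tendsto (fun n => F n x) atTop (𝓝 (F' x))) :
    limsup (fun n => ∫⁻ x, F n x ∂μ) atTop ≤ ∫⁻ x, F' x ∂μ := by
  -- Dominated convergence applies to the truncations `min (F n) B`, and `F n ≤ min (F n) B + E n`.
  have hmin : Tendsto (fun n => ∫⁻ x, min (F n x) (B x) ∂μ) atTop
      (𝓝 (∫⁻ x, min (F' x) (B x) ∂μ)) := by
    refine tendsto_lintegral_of_dominated_convergence' B (fun n => (hF n).min hB)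
      (fun n => ae_of_all _ fun x => min_le_right _ _) hB' ?_
    filter_upwards [hlim] with x hx
    exact hx.min tendsto_const_nhds
  have hsum := hmin.add hE
  rw [add_zero] at hsum
  have h1 : ∀ n, ∫⁻ x, F n x ∂μ ≤ ∫⁻ x, min (F n x) (B x) ∂μ + ∫⁻ x, E n x ∂μ := by
    intro n
    rw [← lintegral_add_left' ((hF n).min hB)]
    refine lintegral_mono_ae ?_
    filter_upwards [hle n] with x hx
    rcases le_total (F n x) (B x) with h | h
    · rw [min_eq_left h]; exact le_self_add
    · rw [min_eq_right h]; exact hx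
  calc limsup (fun n => ∫⁻ x, F n x ∂μ) atTop
      ≤ limsup (fun n => ∫⁻ x, min (F n x) (B x) ∂μ + ∫⁻ x, E n x ∂μ) atTop :=
        limsup_le_limsup (Eventually.of_forall h1)
    _ = ∫⁻ x, min (F' x) (B x) ∂μ := hsum.limsup_eq
    _ ≤ _ := lintegral_mono fun x => min_le_left _ _

/-- One half of Scheffé's lemma: if `H n → H'` a.e. and no `H n` has more mass than `H'`, then the
positive part of `H n - H'` tends to `0` in `L¹`. -/
lemma tendsto_lintegral_tsub_of_le {α : Type*} [MeasurableSpace α] {μ : Measure α}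
    {H : ℕ → α → ℝ≥0∞} {H' : α → ℝ≥0∞}
    (hH : ∀ n, AEMeasurable (H n) μ) (hH' : AEMeasurable H' μ)
    (hfin : ∫⁻ x, H' x ∂μ ≠ ⊤)
    (hle : ∀ n, ∫⁻ x, H n x ∂μ ≤ ∫⁻ x, H' x ∂μ)
    (hlim : ∀ᵐ x ∂μ, Tendsto (fun n => H n x) atTop (𝓝 (H' x))) :
    Tendsto (fun n => ∫⁻ x, (H n x - H' x) ∂μ) atTop (𝓝 0) := by
  have hmin : Tendsto (fun n => ∫⁻ x, min (H n x) (H' x) ∂μ) atTop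
      (𝓝 (∫⁻ x, H' x ∂μ)) := by
    refine tendsto_lintegral_of_dominated_convergence' H' (fun n => (hH n).min hH')
      (fun n => ae_of_all _ fun x => min_le_right _ _) hfin ?_
    filter_upwards [hlim] with x hx
    simpa using hx.min (tendsto_const_nhds (x := H' x))
  have hsub := ENNReal.Tendsto.sub (tendsto_const_nhds (x := ∫⁻ x, H' x ∂μ)) hmin (Or.inl hfin)
  rw [tsub_self] at hsub
  refine tendsto_of_tendsto_of_tendsto_of_le_of_le tendsto_const_nhds hsub (fun _ => zero_le)
    fun n => ?_
  have hne : ∫⁻ x, min (H n x) (H' x) ∂μ ≠ ⊤ :=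
    ne_top_of_le_ne_top hfin (lintegral_mono fun x => min_le_right _ _)
  refine ENNReal.le_sub_of_add_le_right hne ?_
  calc _ = ∫⁻ x, (H n x - H' x) + min (H n x) (H' x) ∂μ :=
        (lintegral_add_right' _ ((hH n).min hH')).symm
    _ = ∫⁻ x, H n x ∂μ := by
        refine lintegral_congr fun x => ?_
        rcases le_total (H n x) (H' x) with h | h
        · rw [min_eq_left h, tsub_eq_zero_of_le h, zero_add]
        · rw [min_eq_right h, tsub_add_cancel_of_le h]
    _ ≤ _ := hle n

/-- Convergence in `L¹` gives a.e. convergence along a subsequence. -/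
lemma exists_subseq_ae_tendsto_zero {α : Type*} [MeasurableSpace α] {μ : Measure α}
    {e : ℕ → α → ℝ} (he : ∀ n, AEStronglyMeasurable (e n) μ)
    (h : Tendsto (fun n => ∫⁻ x, ENNReal.ofReal |e n x| ∂μ) atTop (𝓝 0)) :
    ∃ ns : ℕ → ℕ, StrictMono ns ∧
      ∀ᵐ x ∂μ, Tendsto (fun k => e (ns k) x) atTop (𝓝 0) := by
  have h1 : Tendsto (fun n => eLpNorm (e n - 0) 1 μ) atTop (𝓝 0) := by
    refine h.congr fun n => ?_
    rw [eLpNorm_one_eq_lintegral_enorm]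
    refine lintegral_congr fun x => ?_
    simp [← ofReal_norm]
  have := (tendstoInMeasure_of_tendsto_eLpNorm one_ne_zero he
    aestronglyMeasurable_zero h1).exists_seq_tendsto_ae
  simpa using this

/-- Diagonal selection: if every requirement `P N` can be met eventually by some sequence, then
one sequence meets all the requirements eventually. -/
lemma exists_diagonal {X : Type*} [Nonempty X] (P : ℕ → ℕ → X → Prop)
    (hanti : ∀ N M k x, M ≤ N → P N k x → P M k x)
    (h : ∀ N, ∃ s : ℕ → X, ∀ᶠ k in atTop, P N k (s k)) :
    ∃ s : ℕ → X, ∀ N, ∀ᶠ k in atTop, P N k (s k) := by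
  classical
  -- At index `k`, meet the largest requirement `N ≤ k` that can be met at all.
  have key : ∀ k, ∃ x : X, ∀ N ≤ k, (∃ y, P N k y) → P N k x := by
    intro k
    by_cases hex : ∃ N ≤ k, ∃ y, P N k y
    · obtain ⟨N0, hN0, y0, hy0⟩ := hex
      have hQ := Nat.findGreatest_spec (P := fun N => ∃ y, P N k y) hN0 ⟨y0, hy0⟩
      obtain ⟨x, hx⟩ := hQ
      refine ⟨x, fun N hN hy => hanti _ _ _ _ ?_ hx⟩
      exact Nat.le_findGreatest hN hy
    · refine ⟨Classical.arbitrary X, fun N hN hy => (hex ⟨N, hN, hy⟩).elim⟩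
  choose s hs using key
  refine ⟨s, fun N => ?_⟩
  obtain ⟨t, ht⟩ := h N
  filter_upwards [ht, eventually_ge_atTop N] with k hk hkN
  exact hs k N hkN ⟨_, hk⟩

/-- The minimum of finitely many measurable functions is attained at a measurable index. -/
lemma exists_measurable_argmin {α : Type*} [MeasurableSpace α] (a : ℕ → α → ℝ≥0∞)
    (ha : ∀ n, Measurable (a n)) (N : ℕ) :
    ∃ ν : α → ℕ, Measurable ν ∧ (∀ x, ν x ≤ N) ∧ Measurable (fun x => a (ν x) x) ∧
      ∀ x, ∀ n ≤ N, a (ν x) x ≤ a n x := by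
  induction N with
  | zero =>
    exact ⟨fun _ => 0, measurable_const, fun _ => le_rfl, ha 0, fun x n hn => by
      rw [Nat.le_zero.1 hn]⟩
  | succ N ih =>
    obtain ⟨ν, h1, h2, h3, h4⟩ := ih
    have hset : MeasurableSet {x | a (N+1) x < a (ν x) x} := measurableSet_lt (ha _) h3
    refine ⟨fun x => if a (N+1) x < a (ν x) x then N+1 else ν x,
      Measurable.ite hset measurable_const h1, fun x => ?_, ?_, fun x n hn => ?_⟩
    · dsimp only; split_ifs
      · exact le_rfl
      · exact (h2 x).trans (Nat.le_succ N)
    · have e : (fun x => a (if a (N+1) x < a (ν x) x then N+1 else ν x) x) =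
          fun x => if a (N+1) x < a (ν x) x then a (N+1) x else a (ν x) x := by
        funext x
        split_ifs <;> rfl
      rw [e]
      exact Measurable.ite hset (ha (N+1)) h3
    · dsimp only
      rcases Nat.le_succ_iff.1 hn with h | h
      · split_ifs with hx
        · exact hx.le.trans (h4 x n h)
        · exact h4 x n h
      · subst h
        split_ifs with hx
        · exact le_rfl
        · exact not_lt.1 hx

/-- Approximate measurable selection: the integral of `⨅ n, a n` is approached by choosing
measurably among finitely many of the `a n`. -/
lemma exists_measurable_selection {α : Type*} [MeasurableSpace α] {μ : Measure α}
    (a : ℕ → α → ℝ≥0∞) (ha : ∀ n, Measurable (a n)) (h0 : ∫⁻ x, a 0 x ∂μ ≠ ⊤)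
    {c : ℝ≥0∞} (hc : ∫⁻ x, ⨅ n, a n x ∂μ < c) :
    ∃ (N : ℕ) (ν : α → ℕ), Measurable ν ∧ (∀ x, ν x ≤ N) ∧ ∫⁻ x, a (ν x) x ∂μ < c := by
  choose ν h1 h2 h3 h4 using exists_measurable_argmin a ha
  have hanti : Antitone fun N x => a (ν N x) x := by
    intro N M hNM x
    exact h4 M x _ ((h2 N x).trans hNM)
  have heq : ∀ x, ⨅ n, a n x = ⨅ N, a (ν N x) x := fun x =>
    le_antisymm (le_iInf fun N => iInf_le _ _)
      (le_iInf fun n => iInf_le_of_le n (h4 n x n le_rfl))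
  have h5 : ∫⁻ x, ⨅ n, a n x ∂μ = ⨅ N, ∫⁻ x, a (ν N x) x ∂μ := by
    simp_rw [heq]
    refine lintegral_iInf h3 hanti ?_
    exact ne_top_of_le_ne_top h0 (lintegral_mono fun x => h4 0 x 0 le_rfl)
  rw [h5] at hc
  obtain ⟨N, hN⟩ := iInf_lt_iff.1 hc
  exact ⟨N, ν N, h1 N, h2 N, hN⟩

/-! ### Elementary inequalities -/

lemma add_rpow_le_const {a b q Q : ℝ} (ha : 0 ≤ a) (hb : 0 ≤ b) (hq : 0 ≤ q) (hqQ : q ≤ Q) :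
    (a + b) ^ q ≤ 2 ^ Q * (a ^ q + b ^ q) := by
  have h1 : (a + b) ^ q ≤ (2 * max a b) ^ q := by
    refine Real.rpow_le_rpow (by positivity) ?_ hq
    linarith [le_max_left a b, le_max_right a b]
  have h2 : (max a b) ^ q ≤ a ^ q + b ^ q := by
    rcases max_cases a b with h | h <;> rw [h.1]
    · linarith [Real.rpow_nonneg hb q]
    · linarith [Real.rpow_nonneg ha q]
  rw [Real.mul_rpow (by norm_num) (by positivity)] at h1
  have h3 : (2:ℝ) ^ q ≤ 2 ^ Q := Real.rpow_le_rpow_of_exponent_le (by norm_num) hqQ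
  calc _ ≤ _ := h1
    _ ≤ _ := by gcongr

lemma const_mul_rpow_le {c a q Q : ℝ} (hc : 1 ≤ c) (ha : 0 ≤ a) (hqQ : q ≤ Q) :
    (c * a) ^ q ≤ c ^ Q * a ^ q := by
  rw [Real.mul_rpow (by linarith) ha]
  exact mul_le_mul_of_nonneg_right (Real.rpow_le_rpow_of_exponent_le hc hqQ)
    (Real.rpow_nonneg ha q)

lemma le_one_add_rpow {a q : ℝ} (ha : 0 ≤ a) (hq : 1 ≤ q) : a ≤ 1 + a ^ q := by
  rcases le_total a 1 with h | h
  · linarith [Real.rpow_nonneg ha q]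
  · have := Real.rpow_le_rpow_of_exponent_le h hq
    rw [Real.rpow_one] at this; linarith

lemma rpow_le_one_add_pow {a R q Q : ℝ} (ha : 0 ≤ a) (haR : a ≤ R) (hq : 0 ≤ q) (hqQ : q ≤ Q) :
    a ^ q ≤ (1 + R) ^ Q := by
  calc a ^ q ≤ (1 + R) ^ q := Real.rpow_le_rpow ha (by linarith) hq
    _ ≤ _ := Real.rpow_le_rpow_of_exponent_le (by linarith) hqQ

/-- A splitting of `a` at level `l` which replaces Jensen's inequality when the exponent varies. -/
lemma le_level_add {a l q : ℝ} (ha : 0 ≤ a) (hl : 0 < l) (hq : 1 ≤ q) :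
    a ≤ l + l ^ (1 - q) * a ^ q := by
  rcases le_total a l with h | h
  · have := Real.rpow_nonneg ha q
    have := Real.rpow_nonneg hl.le (1-q)
    nlinarith [mul_nonneg this (Real.rpow_nonneg ha q)]
  · have hapos : 0 < a := hl.trans_le h
    have h1 : (1:ℝ) ≤ (a / l) ^ (q - 1) :=
      Real.one_le_rpow (by rwa [le_div_iff₀ hl, one_mul]) (by linarith)
    have h2 : l ^ (1 - q) * a ^ q = a * (a / l) ^ (q - 1) := by
      rw [Real.div_rpow ha hl.le, show (1 - q) = -(q - 1) by ring, Real.rpow_neg hl.le,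
        Real.rpow_sub hapos, Real.rpow_one]
      field_simp
    rw [h2]; nlinarith

/-! ### Matrix norms -/

lemma mnorm_nonneg {d n : ℕ} (ξ : Mat d n) : 0 ≤ mnorm ξ := Real.sqrt_nonneg _

lemma continuous_mnorm {d n : ℕ} : Continuous (mnorm : Mat d n → ℝ) := by
  unfold mnorm; fun_prop

lemma norm_le_mnorm {d n : ℕ} (ξ : Mat d n) : ‖ξ‖ ≤ mnorm ξ := by
  refine (pi_norm_le_iff_of_nonneg (mnorm_nonneg ξ)).2 fun i =>
    (pi_norm_le_iff_of_nonneg (mnorm_nonneg ξ)).2 fun j => ?_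
  refine Real.le_sqrt_of_sq_le ?_
  rw [Real.norm_eq_abs, sq_abs]
  calc (ξ i j)^2 ≤ ∑ j, (ξ i j)^2 :=
        Finset.single_le_sum (f := fun j => (ξ i j)^2) (fun _ _ => sq_nonneg _) (Finset.mem_univ j)
    _ ≤ _ := Finset.single_le_sum (f := fun i => ∑ j, (ξ i j)^2)
        (fun _ _ => Finset.sum_nonneg fun _ _ => sq_nonneg _) (Finset.mem_univ i)

lemma mnorm_le_norm {d n : ℕ} (hd : d ≤ 3) (hn : n ≤ 3) (ξ : Mat d n) : mnorm ξ ≤ 3 * ‖ξ‖ := by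
  refine Real.sqrt_le_iff.2 ⟨by positivity, ?_⟩
  have h : ∀ i j, (ξ i j)^2 ≤ ‖ξ‖^2 := fun i j => by
    rw [← sq_abs]
    exact pow_le_pow_left₀ (abs_nonneg _) ((norm_le_pi_norm (ξ i) j).trans (norm_le_pi_norm ξ i)) 2
  calc ∑ i, ∑ j, (ξ i j)^2 ≤ ∑ _i : Fin d, ∑ _j : Fin n, ‖ξ‖^2 :=
        Finset.sum_le_sum fun i _ => Finset.sum_le_sum fun j _ => h i j
    _ = (d * n : ℝ) * ‖ξ‖^2 := by simp; ring
    _ ≤ 9 * ‖ξ‖^2 := by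
        gcongr
        have : (d:ℝ) ≤ 3 := by exact_mod_cast hd
        have : (n:ℝ) ≤ 3 := by exact_mod_cast hn
        nlinarith [Nat.cast_nonneg (α := ℝ) d, Nat.cast_nonneg (α := ℝ) n]
    _ = _ := by ring

lemma norm_joinCols_le (A : Mat 3 2) (b : Fin 3 → ℝ) : ‖joinCols A b‖ ≤ ‖A‖ + ‖b‖ := by
  refine (pi_norm_le_iff_of_nonneg (by positivity)).2 fun i =>
    (pi_norm_le_iff_of_nonneg (by positivity)).2 fun j => ?_
  unfold joinCols
  split_ifs with h
  · have := (norm_le_pi_norm (A i) ⟨j, h⟩).trans (norm_le_pi_norm A i)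
    linarith [norm_nonneg b]
  · have := norm_le_pi_norm b i
    linarith [norm_nonneg A]

lemma continuous_joinCols : Continuous (fun t : Mat 3 2 × (Fin 3 → ℝ) => joinCols t.1 t.2) := by
  refine continuous_pi fun i => continuous_pi fun j => ?_
  unfold joinCols
  split_ifs with h
  · fun_prop
  · fun_prop

/-! ### The planar projection -/

/-- The planar projection as a continuous linear map. -/
def projL : Euc 3 →L[ℝ] Euc 2 :=
  LinearMap.toContinuousLinearMap
    { toFun := projα
      map_add' := fun x y => by
        ext i; fin_cases i <;> simp [projα]
      map_smul' := fun c x => by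
        ext i; fin_cases i <;> simp [projα] }

@[simp] lemma projL_apply (x : Euc 3) : projL x = projα x := rfl

lemma continuous_projα : Continuous projα := projL.continuous

lemma measurePreserving_projα_prod :
    MeasurePreserving (fun x : Euc 3 => (projα x, x 2)) volume (volume.prod volume) := by
  have h1 := EuclideanSpace.volume_preserving_symm_measurableEquiv_toLp (Fin 3)
  have h2 := volume_preserving_piFinSuccAbove (fun _ : Fin 3 => ℝ) 2
  have h3 := (PiLp.volume_preserving_toLp (Fin 2))
  have h4 : MeasurePreserving (Prod.swap : ℝ × (Fin 2 → ℝ) → _) (volume.prod volume) (volume.prod volume) :=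
    Measure.measurePreserving_swap
  have h5 := (h3.prod (MeasurePreserving.id (volume : Measure ℝ))).comp (h4.comp (h2.comp h1))
  have h6 : (fun x : Euc 3 => (projα x, x 2)) = Prod.map (WithLp.toLp 2) id ∘
      Prod.swap ∘ (MeasurableEquiv.piFinSuccAbove (fun _ : Fin 3 => ℝ) 2) ∘
        (MeasurableEquiv.toLp 2 (Fin 3 → ℝ)).symm := by
    funext x
    refine Prod.ext ?_ rfl
    ext i
    fin_cases i <;> rfl
  rw [h6]
  exact h5

lemma measurePreserving_projα {ω : Set (Euc 2)} (hω : MeasurableSet ω) :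
    MeasurePreserving projα (volume.restrict (thinDomain ω)) (volume.restrict ω) := by
  have h := measurePreserving_projα_prod.restrict_preimage
    (hω.prod (measurableSet_Ioo (a := (-(1/2) : ℝ)) (b := 1/2)))
  rw [← Measure.prod_restrict] at h
  -- The fibres `(-1/2, 1/2)` have unit length.
  have : IsProbabilityMeasure ((volume : Measure ℝ).restrict (Ioo (-(1/2) : ℝ) (1/2))) :=
    ⟨by rw [Measure.restrict_apply_univ, Real.volume_Ioo]; norm_num⟩
  exact measurePreserving_fst.comp h

/-! ### Cutoffs and weak gradients -/

lemma exists_cutoff {n : ℕ} {K U : Set (Euc n)} (hK : IsCompact K) (hU : IsOpen U) (hKU : K ⊆ U) :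
    ∃ χ : Euc n → ℝ, ContDiff ℝ (⊤ : ℕ∞) χ ∧ HasCompactSupport χ ∧ tsupport χ ⊆ U ∧
      (∀ x ∈ K, ∀ᶠ y in 𝓝 x, χ y = 1) ∧ ∀ x, 0 ≤ χ x ∧ χ x ≤ 1 := by
  obtain ⟨K', hK', h1, h2⟩ := exists_compact_between hK hU hKU
  obtain ⟨f, hf1, hf2, hf3⟩ := exists_contMDiffMap_one_nhds_of_subset_interior
    (modelWithCornersSelf ℝ (Euc n)) (n := (⊤ : ℕ∞)) hK.isClosed h1
  have hsub : tsupport f ⊆ K' :=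
    closure_minimal (fun x hx => by_contra fun h => hx (hf2 x h)) hK'.isClosed
  refine ⟨f, f.contMDiff.contDiff, HasCompactSupport.intro hK' fun x hx => hf2 x hx,
    hsub.trans h2, fun x hx => ?_, fun x => hf3 x⟩
  exact (eventually_nhdsSet_iff_forall.1 hf1) x hx

lemma setIntegral_eq_univ {n : ℕ} {Ω : Set (Euc n)} {F : Euc n → ℝ} (h : ∀ x ∉ Ω, F x = 0) :
    ∫ x in Ω, F x = ∫ x, F x := setIntegral_eq_integral_of_forall_compl_eq_zero h

lemma IsWeakGrad.of_univ {n d : ℕ} {Ω : Set (Euc n)} {v : Euc n → Euc d} {G : Euc n → Mat d n}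
    (h : IsWeakGrad univ v G) : IsWeakGrad Ω v G := by
  intro φ h1 h2 h3 i j
  have := h φ h1 h2 (subset_univ _) i j
  rw [setIntegral_univ, setIntegral_univ] at this
  rw [setIntegral_eq_univ, setIntegral_eq_univ, this]
  · intro x hx
    rw [fderiv_of_notMem_tsupport ℝ (fun h => hx (h3 h))]; simp
  · intro x hx
    rw [image_eq_zero_of_notMem_tsupport (fun h => hx (h3 h))]; simp

lemma isWeakGrad_gradMat {n d : ℕ} {u : Euc n → Euc d} (hu : ContDiff ℝ 1 u) (Ω : Set (Euc n)) :
    IsWeakGrad Ω u (gradMat u) := by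
  refine IsWeakGrad.of_univ ?_
  intro φ h1 h2 _ i j
  rw [setIntegral_univ, setIntegral_univ]
  have hui : ContDiff ℝ 1 (fun x => u x i) :=
    ((EuclideanSpace.proj i : Euc d →L[ℝ] ℝ).contDiff).comp hu
  have hd : ∀ x, fderiv ℝ (fun x => u x i) x (EuclideanSpace.single j 1) = gradMat u x i j := by
    intro x
    have := ((EuclideanSpace.proj i : Euc d →L[ℝ] ℝ).hasFDerivAt.comp x
      (hu.differentiable one_ne_zero x).hasFDerivAt).fderiv
    exact congrArg (fun T => T (EuclideanSpace.single j 1)) this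
  have hφ1 : ContDiff ℝ 1 φ := h1.of_le (by exact_mod_cast le_top)
  have c1 : Continuous fun x => fderiv ℝ (fun x => u x i) x (EuclideanSpace.single j 1) :=
    (hui.continuous_fderiv one_ne_zero).clm_apply continuous_const
  have c2 : Continuous fun x => fderiv ℝ φ x (EuclideanSpace.single j 1) :=
    (hφ1.continuous_fderiv one_ne_zero).clm_apply continuous_const
  have h3 := integral_mul_fderiv_eq_neg_fderiv_mul_of_integrable (μ := volume) (f := φ)
    (g := fun x => u x i) (v := EuclideanSpace.single j 1)
    ((c2.mul hui.continuous).integrable_of_hasCompactSupport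
      ((h2.fderiv_apply ℝ _).mul_right))
    ((h1.continuous.mul c1).integrable_of_hasCompactSupport h2.mul_right)
    ((h1.continuous.mul hui.continuous).integrable_of_hasCompactSupport h2.mul_right)
    (fun x _ => hφ1.differentiable one_ne_zero x) (fun x _ => hui.differentiable one_ne_zero x)
  simp_rw [hd] at h3
  exact h3

/-- A weak gradient is determined almost everywhere. -/
lemma IsWeakGrad.ae_unique {n d : ℕ} {ω : Set (Euc n)} (hω : IsOpen ω) {v : Euc n → Euc d}
    {G G' : Euc n → Mat d n} (h : IsWeakGrad ω v G) (h' : IsWeakGrad ω v G')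
    (hG : ∀ i j, IntegrableOn (fun x => G x i j) ω)
    (hG' : ∀ i j, IntegrableOn (fun x => G' x i j) ω) :
    ∀ᵐ x ∂(volume.restrict ω), G x = G' x := by
  have key : ∀ i j, ∀ᵐ x ∂(volume.restrict ω), G x i j - G' x i j = 0 := by
    intro i j
    rw [ae_restrict_iff' hω.measurableSet]
    refine hω.ae_eq_zero_of_integral_contDiff_smul_eq_zero
      ((hG i j).sub (hG' i j)).locallyIntegrableOn fun g g1 g2 g3 => ?_
    obtain ⟨C, hC⟩ := g1.continuous.bounded_above_of_compact_support g2
    have hint : ∀ F : Euc n → ℝ, IntegrableOn F ω → IntegrableOn (fun x => g x * F x) ω :=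
      fun F hF => hF.bdd_mul (c := C) g1.continuous.aestronglyMeasurable
        (ae_of_all _ hC)
    have e := (h g g1 g2 g3 i j).trans (h' g g1 g2 g3 i j).symm
    rw [← setIntegral_eq_univ (Ω := ω)]
    · simp only [smul_eq_mul, mul_sub]
      rw [integral_sub (hint _ (hG i j)) (hint _ (hG' i j)), e, sub_self]
    · intro x hx
      rw [image_eq_zero_of_notMem_tsupport (fun h => hx (g3 h)), zero_smul]
  have : ∀ᵐ x ∂(volume.restrict ω), ∀ i j, G x i j - G' x i j = 0 :=
    ae_all_iff.2 fun i => ae_all_iff.2 fun j => key i j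
  filter_upwards [this] with x hx
  funext i j
  exact sub_eq_zero.1 (hx i j)

/-- A Sobolev function with compact support in `ω` has a weak gradient on the whole space which
vanishes off `ω`. -/
lemma IsWeakGrad.exists_extension {n d : ℕ} {ω : Set (Euc n)} (hω : IsOpen ω) {w : Euc n → Euc d}
    {G : Euc n → Mat d n} (h : IsWeakGrad ω w G)
    (hG : ∀ i j, IntegrableOn (fun x => G x i j) ω)
    (hc : HasCompactSupport w) (hs : tsupport w ⊆ ω) :
    ∃ G' : Euc n → Mat d n, IsWeakGrad univ w G' ∧ (∀ x ∉ ω, G' x = 0) ∧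
      ∀ᵐ x ∂(volume.restrict ω), G' x = G x := by
  obtain ⟨χ, c1, c2, c3, c4, c5⟩ := exists_cutoff hc hω hs
  have hχ0 : ∀ x ∉ ω, χ x = 0 := fun x hx =>
    image_eq_zero_of_notMem_tsupport (fun h => hx (c3 h))
  have hw0 : ∀ x ∉ ω, w x = 0 := fun x hx =>
    image_eq_zero_of_notMem_tsupport (fun h => hx (hs h))
  -- Multiply by a cutoff `χ` supported in `ω` and equal to `1` near the support of `w`: testing
  -- the cut-off gradient with `φ` is testing `G` with `φ χ`.
  have hweak : IsWeakGrad univ w (fun x i j => χ x * G x i j) := by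
    intro φ h1 h2 _ i j
    have hts : tsupport (fun x => φ x * χ x) ⊆ ω := (tsupport_mul_subset_right).trans c3
    have := h (fun x => φ x * χ x) (h1.mul c1) h2.mul_right hts i j
    rw [setIntegral_univ, setIntegral_univ]
    rw [setIntegral_eq_univ (fun x hx => by simp [hχ0 x hx]),
      setIntegral_eq_univ (fun x hx => by simp [hw0 x hx])] at this
    simp only [← mul_assoc]
    rw [this]
    congr 1
    refine integral_congr_ae (ae_of_all _ fun x => ?_)
    by_cases hx : x ∈ tsupport w
    · have : (fun x => φ x * χ x) =ᶠ[𝓝 x] φ := by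
        filter_upwards [c4 x hx] with y hy
        rw [hy, mul_one]
      simp only [this.fderiv_eq]
    · simp [image_eq_zero_of_notMem_tsupport hx]
  refine ⟨_, hweak, fun x hx => by funext i j; simp [hχ0 x hx], ?_⟩
  refine (hweak.of_univ).ae_unique hω h (fun i j => ?_) hG
  refine (hG i j).bdd_mul (c := 1) c1.continuous.aestronglyMeasurable (ae_of_all _ fun x => ?_)
  rw [Real.norm_eq_abs, abs_of_nonneg (c5 x).1]; exact (c5 x).2

/-! ### Mollification -/

/-- The standard mollifiers: smooth bumps of radius `1/(k+3)`. -/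
def bmp (k : ℕ) : ContDiffBump (0 : Euc 2) where
  rIn := 1 / (2 * ((k:ℝ) + 3))
  rOut := 1 / ((k:ℝ) + 3)
  rIn_pos := by positivity
  rIn_lt_rOut := by
    apply one_div_lt_one_div_of_lt <;> nlinarith [Nat.cast_nonneg (α := ℝ) k]

/-- Mollification at scale `1/(k+3)`. -/
def moll {F : Type*} [NormedAddCommGroup F] [NormedSpace ℝ F] (k : ℕ) (g : Euc 2 → F) :
    Euc 2 → F :=
  convolution ((bmp k).normed volume) g (ContinuousLinearMap.lsmul ℝ ℝ) volume

section moll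
variable {F : Type*} [NormedAddCommGroup F] [NormedSpace ℝ F]

lemma moll_apply (k : ℕ) (g : Euc 2 → F) (x : Euc 2) :
    moll k g x = ∫ t, (bmp k).normed volume t • g (x - t) := rfl

lemma bmp_rOut (k : ℕ) : (bmp k).rOut = 1 / ((k:ℝ) + 3) := rfl

lemma tendsto_bmp_rOut : Tendsto (fun k => (bmp k).rOut) atTop (𝓝 0) := by
  simp only [bmp_rOut]
  have h := tendsto_one_div_add_atTop_nhds_zero_nat (𝕜 := ℝ)
  refine ((tendsto_add_atTop_iff_nat 2).2 h).congr fun n => ?_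
  push_cast; ring

lemma ae_tendsto_moll {g : Euc 2 → F} (hg : LocallyIntegrable g) [CompleteSpace F] :
    ∀ᵐ x, Tendsto (fun k => moll k g x) atTop (𝓝 (g x)) := by
  refine ContDiffBump.ae_convolution_tendsto_right_of_locallyIntegrable (K := 2) tendsto_bmp_rOut
    (Eventually.of_forall fun k => ?_) hg
  simp only [bmp]
  apply le_of_eq
  field_simp

lemma contDiff_moll [CompleteSpace F] (k : ℕ) {g : Euc 2 → F} (hg : LocallyIntegrable g) :
    ContDiff ℝ (⊤ : ℕ∞) (moll k g) :=
  (bmp k).hasCompactSupport_normed.contDiff_convolution_left _ (bmp k).contDiff_normed hg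

lemma integrable_moll_integrand (k : ℕ) {g : Euc 2 → F} (hg : Integrable g) (x : Euc 2) :
    Integrable (fun t => (bmp k).normed volume t • g (x - t)) :=
  (((bmp k).hasCompactSupport_normed (μ := volume)).convolutionExists_left
    (ContinuousLinearMap.lsmul ℝ ℝ) ((bmp k).continuous_normed)
    hg.locallyIntegrable) x

/-- The height of the mollifiers is at most quadratic in the inverse of their radius. -/
lemma exists_normed_bound : ∃ C : ℝ, 0 ≤ C ∧ ∀ k t,
    (bmp k).normed volume t ≤ C * ((k:ℝ) + 3) ^ 2 := by
  have hpos : 0 < volume.real (Metric.ball (0 : Euc 2) 1) :=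
    ENNReal.toReal_pos (Metric.measure_ball_pos _ _ one_pos).ne' measure_ball_lt_top.ne
  refine ⟨4 / volume.real (Metric.ball (0 : Euc 2) 1), by positivity, fun k t => ?_⟩
  refine ((bmp k).normed_le_div_measure_closedBall_rIn volume t).trans ?_
  rw [Measure.addHaar_real_closedBall _ _ (bmp k).rIn_pos.le]
  simp only [bmp, finrank_euclideanSpace, Fintype.card_fin]
  apply le_of_eq
  field_simp
  norm_num

lemma tsupport_moll_subset (k : ℕ) (g : Euc 2 → F) :
    tsupport (moll k g) ⊆ Metric.cthickening (1 / ((k:ℝ) + 3)) (tsupport g) := by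
  refine closure_minimal ?_ Metric.isClosed_cthickening
  intro x hx
  by_contra hcon
  apply hx
  rw [moll_apply]
  refine integral_eq_zero_of_ae (ae_of_all _ fun t => ?_)
  simp only [Pi.zero_apply]
  by_cases ht : t ∈ Metric.ball (0 : Euc 2) (bmp k).rOut
  · have : g (x - t) = 0 := by
      by_contra h
      apply hcon
      refine Metric.mem_cthickening_of_dist_le x (x - t) _ _ (subset_tsupport _ h) ?_
      rw [dist_eq_norm, sub_sub_cancel]
      have := mem_ball_zero_iff.1 ht
      exact this.le
    rw [this, smul_zero]
  · rw [← (bmp k).support_normed_eq (μ := volume)] at ht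
    rw [Function.notMem_support.1 ht, zero_smul]

lemma norm_moll_le (k : ℕ) {g : Euc 2 → F} {R : ℝ} (hR : ∀ x, ‖g x‖ ≤ R) (x : Euc 2) :
    ‖moll k g x‖ ≤ R := by
  rw [moll_apply]
  have h : ∫ t, (bmp k).normed volume t * R = R := by
    rw [integral_mul_const, (bmp k).integral_normed, one_mul]
  rw [← h]
  refine norm_integral_le_of_norm_le ((bmp k).integrable_normed.mul_const R)
    (ae_of_all _ fun t => ?_)
  rw [norm_smul, Real.norm_of_nonneg ((bmp k).nonneg_normed t)]
  exact mul_le_mul_of_nonneg_left (hR _) ((bmp k).nonneg_normed t)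

/-- Mollification commutes with weak differentiation. -/
lemma gradMat_moll {d : ℕ} (k : ℕ) {w : Euc 2 → Euc d} {G : Euc 2 → Mat d 2}
    (h : IsWeakGrad univ w G) (hw : Integrable w) (hG : Integrable G) (x : Euc 2) :
    gradMat (moll k w) x = moll k G x := by
  set ρ : Euc 2 → ℝ := (bmp k).normed volume with hρ
  have hρc : HasCompactSupport ρ := (bmp k).hasCompactSupport_normed
  have hρs : ContDiff ℝ (⊤ : ℕ∞) ρ := (bmp k).contDiff_normed
  have hρ1 : ContDiff ℝ 1 ρ := hρs.of_le (by exact_mod_cast le_top)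
  funext i j
  set e : Euc 2 := EuclideanSpace.single j 1 with he
  have hd := (hρc.hasFDerivAt_convolution_left (ContinuousLinearMap.lsmul ℝ ℝ) hρ1
    hw.locallyIntegrable x).fderiv
  have hint : Integrable (fun t => (fderiv ℝ ρ t e) • w (x - t)) :=
    (((hρc.fderiv_apply ℝ e)).convolutionExists_left
      (ContinuousLinearMap.lsmul ℝ ℝ)
      ((hρ1.continuous_fderiv one_ne_zero).clm_apply continuous_const) hw.locallyIntegrable) x
  have h1 : gradMat (moll k w) x i j = ∫ t, (fderiv ℝ ρ t e) * w (x - t) i := by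
    have h2 : fderiv ℝ (moll k w) x e = ∫ t, (fderiv ℝ ρ t e) • w (x - t) := by
      unfold moll
      rw [hd]
      have hce := ((hρc.fderiv ℝ).convolutionExists_left
        ((ContinuousLinearMap.lsmul ℝ ℝ : ℝ →L[ℝ] Euc d →L[ℝ] Euc d).precompL (Euc 2))
        (hρ1.continuous_fderiv one_ne_zero) hw.locallyIntegrable) x
      rw [convolution, ContinuousLinearMap.integral_apply hce]
      rfl
    unfold gradMat
    rw [← he, h2]
    have := (EuclideanSpace.proj i : Euc d →L[ℝ] ℝ).integral_comp_comm hint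
    exact this.symm
  have h3 : moll k G x i j = ∫ t, ρ t * G (x - t) i j := by
    have hint2 := integrable_moll_integrand k hG x
    have := ((ContinuousLinearMap.proj j : (Fin 2 → ℝ) →L[ℝ] ℝ).comp
      (ContinuousLinearMap.proj i : (Mat d 2) →L[ℝ] (Fin 2 → ℝ))).integral_comp_comm hint2
    exact this.symm
  rw [h1, h3]
  rw [← integral_sub_left_eq_self (fun t => fderiv ℝ ρ t e * w (x - t) i) volume x,
    ← integral_sub_left_eq_self (fun t => ρ t * G (x - t) i j) volume x]
  simp only [sub_sub_cancel]
  have hψ : HasCompactSupport (fun y => ρ (x - y)) :=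
    hρc.comp_homeomorph (Homeomorph.subLeft x)
  have := h (fun y => ρ (x - y)) (hρs.comp (contDiff_const.sub contDiff_id)) hψ
    (subset_univ _) i j
  rw [setIntegral_univ, setIntegral_univ] at this
  rw [this, ← integral_neg]
  refine integral_congr_ae (ae_of_all _ fun y => ?_)
  have hdy : fderiv ℝ (fun y => ρ (x - y)) y e = - fderiv ℝ ρ (x - y) e := by
    have := ((hρ1.differentiable one_ne_zero (x - y)).hasFDerivAt.comp y
      ((hasFDerivAt_id y).const_sub x)).fderiv
    have h4 := congrArg (fun T : Euc 2 →L[ℝ] ℝ => T e) this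
    simp at h4
    exact h4
  simp only [hdy, ← he]
  ring

end moll

/-! ### Variable-exponent mollification -/

lemma LogHolder.continuousOn {n : ℕ} {A : Set (Euc n)} {p : Euc n → ℝ} (h : LogHolder A p) :
    ContinuousOn p A := by
  obtain ⟨γ, hγ, h⟩ := h
  intro x hx
  rw [Metric.continuousWithinAt_iff]
  intro ε hε
  refine ⟨min (1/2) (Real.exp (-(γ/ε + 1))), by positivity, fun y hy hyx => ?_⟩
  rcases eq_or_ne y x with rfl | hne
  · simpa using hε
  have hpos : 0 < dist y x := dist_pos.2 hne
  have h1 := h y hy x hx hpos (hyx.trans_le (min_le_left _ _))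
  have h2 : Real.log (dist y x) < -(γ/ε+1) := by
    rw [Real.log_lt_iff_lt_exp hpos]; exact hyx.trans_le (min_le_right _ _)
  have h3 : 0 < γ / ε := by positivity
  have h4 : γ / ε < |Real.log (dist y x)| := by
    rw [abs_of_neg (by linarith)]; linarith
  rw [Real.dist_eq]
  refine h1.trans_lt ?_
  rw [div_lt_iff₀ (h3.trans h4)]
  rwa [div_lt_iff₀ hε, mul_comm] at h4

/-- By continuity, the bounds on a log-Hölder exponent hold everywhere on an open set. -/
lemma IsPbLog.bounds {n : ℕ} {ω : Set (Euc n)} (hω : IsOpen ω) {p : Euc n → ℝ}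
    (h : IsPbLog ω p) : ∃ pm pM : ℝ, 1 < pm ∧ ∀ x ∈ ω, pm ≤ p x ∧ p x ≤ pM := by
  obtain ⟨⟨-, pm, pM, h1, h2⟩, h3⟩ := h
  refine ⟨pm, pM, h1, fun x hx => ?_⟩
  have hop : IsOpen (ω ∩ p ⁻¹' (Icc pm pM)ᶜ) :=
    h3.continuousOn.isOpen_inter_preimage hω isClosed_Icc.isOpen_compl
  rw [ae_restrict_iff' hω.measurableSet] at h2
  have h0 : volume (ω ∩ p ⁻¹' (Icc pm pM)ᶜ) = 0 := by
    refine measure_mono_null ?_ (ae_iff.1 h2)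
    rintro y ⟨hy, hy'⟩ hcon
    exact hy' (hcon hy)
  rw [hop.measure_eq_zero_iff volume] at h0
  by_contra hcon
  exact (h0 ▸ (⟨hx, hcon⟩ : x ∈ ω ∩ p ⁻¹' (Icc pm pM)ᶜ) : x ∈ (∅ : Set (Euc n)))

/-- The log-Hölder condition replaces Jensen's inequality for mollifiers: the oscillation of `q` on
a ball of radius `1/(k+3)` is `O(1/log k)`, whereas the averages are at most polynomial in `k`. -/
lemma moll_rpow_bound {F : Type*} [NormedAddCommGroup F] [NormedSpace ℝ F] {ω : Set (Euc 2)}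
    {q : Euc 2 → ℝ} {Q : ℝ} (hq1 : ∀ x ∈ ω, 1 ≤ q x) (hqQ : ∀ x ∈ ω, q x ≤ Q)
    (hlog : LogHolder ω q) {g : Euc 2 → F} {h : Euc 2 → ℝ} (hg0 : ∀ x ∉ ω, g x = 0)
    (h0 : ∀ x, 0 ≤ h x) (hh : Integrable h) (hgh : ∀ y ∈ ω, ‖g y‖ ^ q y = h y) :
    ∃ K : ℝ, 0 ≤ K ∧ ∀ k, ∀ x ∈ ω, ‖moll k g x‖ ^ q x ≤ K * (1 + moll k h x) := by
  obtain ⟨γ, hγ, hlog⟩ := hlog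
  obtain ⟨C, hC, hρ⟩ := exists_normed_bound
  set A := ∫ x, h x with hA
  have hA0 : 0 ≤ A := integral_nonneg h0
  set L := Real.exp (γ * (Real.log (1 + C * A) + 2)) with hL
  have hLpos : 0 < L := Real.exp_pos _
  refine ⟨(1 + L) ^ Q, by positivity, fun k x hx => ?_⟩
  have hqx := hq1 x hx
  have hqx0 : 0 < q x := by linarith
  have hmn : ∀ t, 0 ≤ (bmp k).normed volume t := (bmp k).nonneg_normed
  have hmh0 : 0 ≤ moll k h x := by
    rw [moll_apply]; exact integral_nonneg fun t => mul_nonneg (hmn t) (h0 _)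
  set M := 1 + moll k h x with hM
  have hM1 : 1 ≤ M := by linarith
  have hM0 : 0 < M := by linarith
  have hk3 : (3:ℝ) ≤ k + 3 := by linarith [Nat.cast_nonneg (α := ℝ) k]
  have hℓ : 1 ≤ Real.log (k + 3) := by
    rw [Real.le_log_iff_exp_le (by linarith)]
    linarith [Real.exp_one_lt_three]
  set η := γ / Real.log (k+3) with hη
  have hη0 : 0 ≤ η := by positivity
  have hMle : M ≤ (1 + C * A) * ((k:ℝ)+3)^2 := by
    have h1 : moll k h x ≤ C * ((k:ℝ)+3)^2 * A := by
      rw [moll_apply, hA, ← integral_sub_left_eq_self h volume x, ← integral_const_mul]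
      refine integral_mono (integrable_moll_integrand k hh x)
        ((hh.comp_sub_left x).const_mul _) fun t => ?_
      exact mul_le_mul_of_nonneg_right (hρ k t) (h0 _)
    have h2 : (1:ℝ) ≤ ((k:ℝ)+3)^2 := by nlinarith
    rw [hM]; nlinarith
  have hMη : M ^ η ≤ L := by
    rw [Real.rpow_def_of_pos hM0, hL]
    apply Real.exp_le_exp.2
    have hCA : 0 ≤ Real.log (1 + C * A) := Real.log_nonneg (by nlinarith)
    have h1 : Real.log M ≤ Real.log (1 + C*A) + 2 * Real.log (k+3) := by
      have h2 := Real.log_le_log hM0 hMle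
      rwa [Real.log_mul (by positivity) (by positivity), Real.log_pow, Nat.cast_ofNat] at h2
    have h3 : Real.log M ≤ (Real.log (1 + C*A) + 2) * Real.log (k+3) := by nlinarith
    rw [hη, mul_div_assoc', div_le_iff₀ (by linarith)]
    nlinarith
  -- The splitting level is the bound to be proved for `‖moll k g x‖`, up to a constant. Replacing
  -- `q (x - t)` by `q x` in the exponent costs at most the bounded factor `M ^ η ≤ L`.
  set l := M ^ (1 / q x) with hl
  have hl0 : 0 < l := by positivity
  have hexp : ∀ t, ‖t‖ < 1 / ((k:ℝ)+3) → x - t ∈ ω → q x - q (x - t) ≤ η := by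
    intro t ht hxt
    rcases eq_or_ne t 0 with rfl | hne
    · simpa using hη0
    have hd : dist x (x - t) = ‖t‖ := by rw [dist_eq_norm, sub_sub_cancel]
    have htp : 0 < ‖t‖ := norm_pos_iff.2 hne
    have h13 : 1 / ((k:ℝ)+3) ≤ 1/3 := one_div_le_one_div_of_le (by norm_num) hk3
    have h1 := hlog x hx (x - t) hxt (by rwa [hd]) (by rw [hd]; linarith)
    rw [hd] at h1
    refine (le_abs_self _).trans (h1.trans ?_)
    rw [hη]
    have h2 : Real.log ‖t‖ ≤ - Real.log (k+3) := by
      have := Real.log_le_log htp ht.le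
      rwa [one_div, Real.log_inv] at this
    apply div_le_div_of_nonneg_left hγ.le (by linarith)
    rw [abs_of_nonpos (by linarith)]; linarith
  set c := M ^ (1 / q x - 1) * L with hc
  have hc0 : 0 ≤ c := by positivity
  have hpt : ∀ t, ‖(bmp k).normed volume t • g (x - t)‖ ≤
      (bmp k).normed volume t * l + c * ((bmp k).normed volume t • h (x - t)) := by
    intro t
    have hr : 0 ≤ (bmp k).normed volume t * l + c * ((bmp k).normed volume t • h (x - t)) :=
      add_nonneg (mul_nonneg (hmn t) hl0.le)
        (mul_nonneg hc0 (mul_nonneg (hmn t) (h0 _)))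
    by_cases hxt : x - t ∈ ω
    swap
    · rw [hg0 _ hxt, smul_zero, norm_zero]; exact hr
    by_cases ht : t ∈ Metric.ball (0 : Euc 2) (bmp k).rOut
    swap
    · rw [← (bmp k).support_normed_eq (μ := volume)] at ht
      rw [Function.notMem_support.1 ht]; simp
    have ht' := mem_ball_zero_iff.1 ht
    rw [bmp_rOut] at ht'
    have h1 := le_level_add (norm_nonneg (g (x - t))) hl0 (hq1 _ hxt)
    rw [hgh _ hxt] at h1
    have h2 : l ^ (1 - q (x - t)) ≤ c := by
      rw [hl, ← Real.rpow_mul hM0.le]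
      have h3 : 1 / q x * (1 - q (x - t)) = (1 / q x - 1) + (q x - q (x - t)) / q x := by
        field_simp; ring
      rw [h3, Real.rpow_add hM0, hc]
      refine mul_le_mul_of_nonneg_left (le_trans ?_ hMη) (by positivity)
      apply Real.rpow_le_rpow_of_exponent_le hM1
      rw [div_le_iff₀ hqx0]
      have := hexp t ht' hxt
      nlinarith
    rw [norm_smul, Real.norm_of_nonneg (hmn t), smul_eq_mul]
    have h4 : ‖g (x - t)‖ ≤ l + c * h (x - t) :=
      h1.trans (by nlinarith [mul_le_mul_of_nonneg_right h2 (h0 (x - t))])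
    calc _ ≤ (bmp k).normed volume t * (l + c * h (x - t)) :=
          mul_le_mul_of_nonneg_left h4 (hmn t)
      _ = _ := by ring
  have hfin : ‖moll k g x‖ ≤ (1 + L) * l := by
    have hi1 := ((bmp k).integrable_normed (μ := volume)).mul_const l
    have hi2 := (integrable_moll_integrand k hh x).const_mul c
    have h1 := norm_integral_le_of_norm_le (hi1.add hi2) (ae_of_all _ hpt)
    have h2 : ∫ t, ((bmp k).normed volume t * l + c * ((bmp k).normed volume t • h (x - t)))
        = l + c * moll k h x := by
      rw [integral_add hi1 hi2, integral_mul_const, integral_const_mul, (bmp k).integral_normed,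
        one_mul, moll_apply]
    have h3 : ‖moll k g x‖ ≤ l + c * moll k h x := by
      rw [← h2]; exact h1
    have h4 : c * M = L * l := by
      rw [hc, hl, Real.rpow_sub hM0, Real.rpow_one]; field_simp
    have h5 : c * moll k h x ≤ c * M := mul_le_mul_of_nonneg_left (by linarith) hc0
    linarith
  calc ‖moll k g x‖ ^ q x ≤ ((1 + L) * l) ^ q x :=
        Real.rpow_le_rpow (norm_nonneg _) hfin hqx0.le
    _ ≤ (1 + L) ^ Q * l ^ q x := const_mul_rpow_le (by linarith) hl0.le (hqQ x hx)
    _ = (1 + L) ^ Q * M := by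
        rw [hl, ← Real.rpow_mul hM0.le, one_div_mul_cancel hqx0.ne', Real.rpow_one]

/-- Mollification converges in the modular of a log-Hölder exponent. -/
lemma moll_modular {F : Type*} [NormedAddCommGroup F] [NormedSpace ℝ F] [CompleteSpace F]
    {ω : Set (Euc 2)} (hω : IsOpen ω) (hfin : volume ω ≠ ⊤)
    {q : Euc 2 → ℝ} {Q : ℝ} (hqm : Measurable q) (hq1 : ∀ x ∈ ω, 1 ≤ q x)
    (hqQ : ∀ x ∈ ω, q x ≤ Q) (hlog : LogHolder ω q) {g : Euc 2 → F}
    (hgm : AEStronglyMeasurable g volume) (hg0 : ∀ x ∉ ω, g x = 0)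
    (hmod : ∫⁻ x in ω, ENNReal.ofReal (‖g x‖ ^ q x) < ⊤) :
    Integrable g ∧
    Tendsto (fun k => ∫⁻ x in ω, ENNReal.ofReal (‖moll k g x - g x‖ ^ q x)) atTop (𝓝 0) := by
  set h : Euc 2 → ℝ := ω.indicator (fun y => ‖g y‖ ^ q y) with hh
  have h0 : ∀ x, 0 ≤ h x := fun x => indicator_nonneg (fun y _ => by positivity) x
  have hgh : ∀ y ∈ ω, ‖g y‖ ^ q y = h y := fun y hy => by rw [hh, indicator_of_mem hy]
  have hint : Integrable h := by
    rw [hh, integrable_indicator_iff hω.measurableSet]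
    refine ⟨(hgm.norm.aemeasurable.pow hqm.aemeasurable).aestronglyMeasurable.restrict, ?_⟩
    rw [hasFiniteIntegral_iff_ofReal (ae_of_all _ fun x => by positivity)]
    exact hmod
  have hgi : Integrable g := by
    have h1 : Integrable (ω.indicator (fun _ => (1:ℝ))) := by
      rw [integrable_indicator_iff hω.measurableSet]
      exact integrableOn_const hfin
    refine (h1.add hint).mono' hgm (ae_of_all _ fun x => ?_)
    by_cases hx : x ∈ ω
    · rw [Pi.add_apply, indicator_of_mem hx, ← hgh x hx]
      exact le_one_add_rpow (norm_nonneg _) (hq1 x hx)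
    · rw [hg0 x hx, norm_zero]
      exact add_nonneg (indicator_nonneg (fun _ _ => zero_le_one) _) (h0 x)
  refine ⟨hgi, ?_⟩
  obtain ⟨K, hK, hbd⟩ := moll_rpow_bound hq1 hqQ hlog hg0 h0 hint hgh
  have hmh0 : ∀ k x, 0 ≤ moll k h x := fun k x => by
    rw [moll_apply]
    exact integral_nonneg fun t => mul_nonneg ((bmp k).nonneg_normed t) (h0 _)
  have hH : Tendsto (fun k => ∫⁻ x, (ENNReal.ofReal (moll k h x) - ENNReal.ofReal (h x)))
      atTop (𝓝 0) := by
    refine tendsto_lintegral_tsub_of_le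
      (fun k => (contDiff_moll k hint.locallyIntegrable).continuous.measurable.ennreal_ofReal.aemeasurable)
      hint.aemeasurable.ennreal_ofReal ?_ (fun k => ?_) ?_
    · rw [← ofReal_integral_eq_lintegral_ofReal hint (ae_of_all _ h0)]
      exact ENNReal.ofReal_ne_top
    · have hmi : Integrable (moll k h) :=
        ((bmp k).integrable_normed).integrable_convolution (ContinuousLinearMap.lsmul ℝ ℝ) hint
      rw [← ofReal_integral_eq_lintegral_ofReal hint (ae_of_all _ h0),
        ← ofReal_integral_eq_lintegral_ofReal hmi (ae_of_all _ (hmh0 k))]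
      have : ∫ x, moll k h x = ∫ x, h x := by
        have h1 := integral_convolution (μ := volume) (ν := volume)
          (ContinuousLinearMap.lsmul ℝ ℝ) ((bmp k).integrable_normed (μ := volume)) hint
        rw [(bmp k).integral_normed] at h1
        exact h1.trans (one_smul ℝ _)
      rw [this]
    · filter_upwards [ae_tendsto_moll hint.locallyIntegrable] with x hx
      exact (ENNReal.continuous_ofReal.tendsto _).comp hx
  have hlim : limsup (fun k => ∫⁻ x in ω, ENNReal.ofReal (‖moll k g x - g x‖ ^ q x)) atTop
      ≤ ∫⁻ x in ω, (0 : ℝ≥0∞) := by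
    refine limsup_lintegral_le_of_dominated
      (B := fun x => ENNReal.ofReal (2 ^ Q * (K * (1 + h x) + h x)))
      (E := fun k x => ENNReal.ofReal (2 ^ Q * K) *
        (ENNReal.ofReal (moll k h x) - ENNReal.ofReal (h x)))
      (fun k => ?_) ?_ (fun k => ?_) ?_ ?_ ?_
    · refine AEMeasurable.ennreal_ofReal (AEMeasurable.pow ?_ hqm.aemeasurable)
      exact ((contDiff_moll k hgi.locallyIntegrable).continuous.aestronglyMeasurable.sub
        hgm.restrict).norm.aemeasurable
    · have := hint.aemeasurable.restrict (s := ω)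
      fun_prop
    · filter_upwards [ae_restrict_mem hω.measurableSet] with x hx
      have h2Q : (0:ℝ) ≤ 2 ^ Q := by positivity
      have h1 : ‖moll k g x - g x‖ ^ q x ≤ 2 ^ Q * (‖moll k g x‖ ^ q x + ‖g x‖ ^ q x) :=
        (Real.rpow_le_rpow (norm_nonneg _) (norm_sub_le _ _) (by linarith [hq1 x hx])).trans
          (add_rpow_le_const (norm_nonneg _) (norm_nonneg _) (by linarith [hq1 x hx]) (hqQ x hx))
      rw [hgh x hx] at h1
      have h2 : ‖moll k g x - g x‖ ^ q x ≤ 2 ^ Q * (K * (1 + h x) + h x)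
          + 2 ^ Q * K * (moll k h x - h x) := by
        refine h1.trans ?_
        have := mul_le_mul_of_nonneg_left (hbd k x hx) h2Q
        nlinarith
      rw [← ENNReal.ofReal_sub _ (h0 x), ← ENNReal.ofReal_mul (by positivity)]
      exact (ENNReal.ofReal_le_ofReal h2).trans ENNReal.ofReal_add_le
    · have hB : IntegrableOn (fun x => 2 ^ Q * (K * (1 + h x) + h x)) ω :=
        ((((integrableOn_const hfin).add hint.integrableOn).const_mul K).add
          hint.integrableOn).const_mul _
      rw [← ofReal_integral_eq_lintegral_ofReal hB
        (ae_of_all _ fun x => by have := h0 x; positivity)]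
      exact ENNReal.ofReal_ne_top
    · simp_rw [lintegral_const_mul' _ _ ENNReal.ofReal_ne_top]
      have h1 : Tendsto (fun k => ∫⁻ x in ω, (ENNReal.ofReal (moll k h x) - ENNReal.ofReal (h x)))
          atTop (𝓝 0) :=
        tendsto_of_tendsto_of_tendsto_of_le_of_le tendsto_const_nhds hH (fun _ => zero_le)
          (fun k => setLIntegral_le_lintegral _ _)
      simpa using ENNReal.Tendsto.const_mul h1 (Or.inr ENNReal.ofReal_ne_top)
    · filter_upwards [ae_restrict_of_ae (ae_tendsto_moll hgi.locallyIntegrable),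
        ae_restrict_mem hω.measurableSet] with x hx hxω
      have h1 : Tendsto (fun k => ‖moll k g x - g x‖) atTop (𝓝 0) := by
        simpa using (hx.sub_const (g x)).norm
      have hq0 : 0 < q x := by linarith [hq1 x hxω]
      have h2 := (h1.rpow_const (p := q x) (Or.inr hq0.le))
      rw [Real.zero_rpow hq0.ne'] at h2
      have h3 := (ENNReal.continuous_ofReal.tendsto _).comp h2
      rw [ENNReal.ofReal_zero] at h3
      exact h3
  rw [lintegral_zero] at hlim
  exact tendsto_of_le_liminf_of_limsup_le zero_le hlim

/-! ### Density of test functions -/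

lemma continuous_gradMat {n d : ℕ} {u : Euc n → Euc d} (hu : ContDiff ℝ 1 u) :
    Continuous (gradMat u) := by
  refine continuous_pi fun i => continuous_pi fun j => ?_
  have h1 : Continuous fun x => fderiv ℝ u x (EuclideanSpace.single j 1) :=
    (hu.continuous_fderiv one_ne_zero).clm_apply continuous_const
  exact (EuclideanSpace.proj i : Euc d →L[ℝ] ℝ).continuous.comp h1

lemma aemeasurable_mat {α : Type*} [MeasurableSpace α] {μ : Measure α} {d n : ℕ}
    {G : α → Mat d n} (h : ∀ i j, AEMeasurable (fun x => G x i j) μ) : AEMeasurable G μ :=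
  aemeasurable_pi_lambda _ fun i => aemeasurable_pi_lambda _ fun j => h i j

/-- In `W^{1,q(·)}_0(ω)`, with `q` log-Hölder, smooth compactly supported functions are dense. -/
lemma exists_smooth_approx {ω : Set (Euc 2)} (hω : IsOpen ω) (hfin : volume ω ≠ ⊤)
    {q : Euc 2 → ℝ} {Q : ℝ} (hQ : 0 ≤ Q) (hqm : Measurable q) (hq1 : ∀ x ∈ ω, 1 ≤ q x)
    (hqQ : ∀ x ∈ ω, q x ≤ Q) (hlog : LogHolder ω q) {v : Euc 2 → Euc 3} {Gv : Euc 2 → Mat 3 2}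
    (hv : MemW1p0Planar ω q v Gv) {δ : ℝ≥0∞} (hδ : 0 < δ) :
    ∃ φ : Euc 2 → Euc 3, ContDiff ℝ (⊤ : ℕ∞) φ ∧ HasCompactSupport φ ∧ tsupport φ ⊆ ω ∧
      ∫⁻ x in ω, (ENNReal.ofReal (‖φ x - v x‖ ^ q x)
        + ENNReal.ofReal (mnorm (fun i l => gradMat φ x i l - Gv x i l) ^ q x)) ≤ δ := by
  obtain ⟨-, ws, Gws, hws, hlim⟩ := hv
  -- `3 ^ Q` is the cost of comparing the two matrix norms, `2 ^ Q` that of the quasi-triangle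
  -- inequality for the modular.
  set c : ℝ := 3 ^ Q * 2 ^ Q with hc
  have h3Q : (1:ℝ) ≤ 3 ^ Q := Real.one_le_rpow (by norm_num) hQ
  have h2Q : (1:ℝ) ≤ 2 ^ Q := Real.one_le_rpow (by norm_num) hQ
  have hc0 : 0 ≤ c := by positivity
  have hδ2 : 0 < δ / 2 := ENNReal.half_pos hδ.ne'
  have hlim' := ENNReal.Tendsto.const_mul hlim (Or.inr (ENNReal.ofReal_ne_top (r := c)))
  rw [mul_zero] at hlim'
  obtain ⟨j, hj⟩ := (hlim'.eventually_lt_const hδ2).exists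
  obtain ⟨⟨hwm, hGm, hweak, hwfin, hGfin⟩, hwc, hws'⟩ := hws j
  set w := ws j
  set G := Gws j
  have hw0 : ∀ x ∉ ω, w x = 0 := fun x hx =>
    image_eq_zero_of_notMem_tsupport (fun h => hx (hws' h))
  -- A function measurable on `ω` and vanishing off `ω` is measurable on the whole space.
  have ext_meas : ∀ {F : Type} [NormedAddCommGroup F] (g : Euc 2 → F), (∀ x ∉ ω, g x = 0) →
      AEStronglyMeasurable g (volume.restrict ω) → AEStronglyMeasurable g volume := by
    intro F _ g hg0 hg
    have h1 := (aestronglyMeasurable_indicator_iff hω.measurableSet).2 hg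
    rwa [indicator_eq_self.2] at h1
    intro x hx
    by_contra h
    exact hx (hg0 x h)
  have hGm' : AEMeasurable G (volume.restrict ω) := aemeasurable_mat hGm
  have hmn : AEMeasurable (fun x => mnorm (G x)) (volume.restrict ω) :=
    continuous_mnorm.measurable.comp_aemeasurable hGm'
  have hGint : ∀ i l, IntegrableOn (fun x => G x i l) ω := by
    intro i l
    have h1 : IntegrableOn (fun x => mnorm (G x) ^ q x) ω := by
      refine ⟨(hmn.pow hqm.aemeasurable).aestronglyMeasurable, ?_⟩
      rw [hasFiniteIntegral_iff_ofReal (ae_of_all _ fun x => Real.rpow_nonneg (mnorm_nonneg _) _)]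
      exact hGfin
    refine ((integrableOn_const (C := (1:ℝ)) hfin).add h1).mono' (hGm i l).aestronglyMeasurable ?_
    filter_upwards [ae_restrict_mem hω.measurableSet] with x hx
    exact ((norm_le_pi_norm (G x i) l).trans ((norm_le_pi_norm (G x) i).trans
      (norm_le_mnorm _))).trans (le_one_add_rpow (mnorm_nonneg _) (hq1 x hx))
  obtain ⟨G', hG'w, hG'0, hG'G⟩ := hweak.exists_extension hω hGint hwc hws'
  obtain ⟨hwi, hwlim⟩ := moll_modular hω hfin hqm hq1 hqQ hlog (ext_meas w hw0 hwm) hw0 hwfin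
  obtain ⟨hGi, hGlim⟩ := moll_modular hω hfin hqm hq1 hqQ hlog (g := G')
    (ext_meas G' hG'0 (hGm'.congr (hG'G.mono fun x hx => hx.symm)).aestronglyMeasurable) hG'0
    (by
      refine lt_of_le_of_lt (lintegral_mono_ae ?_) hGfin
      filter_upwards [hG'G, ae_restrict_mem hω.measurableSet] with x hx hxω
      rw [hx]
      exact ENNReal.ofReal_le_ofReal (Real.rpow_le_rpow (norm_nonneg _) (norm_le_mnorm _)
        (by linarith [hq1 x hxω])))
  have hX : Tendsto (fun k => ENNReal.ofReal c * ∫⁻ x in ω, (ENNReal.ofReal (‖moll k w x - w x‖ ^ q x)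
      + ENNReal.ofReal (‖moll k G' x - G' x‖ ^ q x))) atTop (𝓝 0) := by
    have h1 := ENNReal.Tendsto.const_mul (hwlim.add hGlim)
      (Or.inr (ENNReal.ofReal_ne_top (r := c)))
    rw [add_zero, mul_zero] at h1
    refine h1.congr fun k => ?_
    rw [lintegral_add_left']
    refine AEMeasurable.ennreal_ofReal (AEMeasurable.pow ?_ hqm.aemeasurable)
    exact ((contDiff_moll k hwi.locallyIntegrable).continuous.aestronglyMeasurable.sub
        hwm).norm.aemeasurable
  obtain ⟨r, hr, hrω⟩ := IsCompact.exists_cthickening_subset_open hwc hω hws'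
  have hrk : ∀ᶠ k : ℕ in atTop, 1 / ((k:ℝ) + 3) ≤ r := by
    filter_upwards [tendsto_bmp_rOut.eventually_lt_const hr] with k hk
    exact hk.le
  obtain ⟨k, hk, hkr⟩ := ((hX.eventually_lt_const hδ2).and hrk).exists
  have hsub : tsupport (moll k w) ⊆ Metric.cthickening r (tsupport w) :=
    (tsupport_moll_subset k w).trans (Metric.cthickening_mono hkr _)
  refine ⟨moll k w, contDiff_moll k hwi.locallyIntegrable,
    HasCompactSupport.of_support_subset_isCompact (IsCompact.cthickening hwc)
      ((subset_tsupport _).trans hsub), hsub.trans hrω, ?_⟩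
  have hle : ∀ᵐ x ∂(volume.restrict ω), (ENNReal.ofReal (‖moll k w x - v x‖ ^ q x)
        + ENNReal.ofReal (mnorm (fun i l => gradMat (moll k w) x i l - Gv x i l) ^ q x)) ≤
      ENNReal.ofReal c * ((ENNReal.ofReal (‖moll k w x - w x‖ ^ q x)
      + ENNReal.ofReal (‖moll k G' x - G' x‖ ^ q x)) + (ENNReal.ofReal (‖w x - v x‖ ^ q x)
        + ENNReal.ofReal (mnorm (fun i l => G x i l - Gv x i l) ^ q x))) := by
    filter_upwards [hG'G, ae_restrict_mem hω.measurableSet] with x hx hxω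
    have hq0 : 0 ≤ q x := by linarith [hq1 x hxω]
    rw [gradMat_moll k hG'w hwi hGi]
    have e1 : ‖moll k w x - v x‖ ^ q x ≤ c * (‖moll k w x - w x‖ ^ q x + ‖w x - v x‖ ^ q x) := by
      refine (Real.rpow_le_rpow (norm_nonneg _) (norm_sub_le_norm_sub_add_norm_sub _ (w x) _)
        hq0).trans ((add_rpow_le_const (norm_nonneg _) (norm_nonneg _) hq0 (hqQ x hxω)).trans ?_)
      refine mul_le_mul_of_nonneg_right ?_ (by positivity)
      nlinarith
    have e2 : mnorm (fun i l => moll k G' x i l - Gv x i l) ^ q x ≤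
        c * (‖moll k G' x - G' x‖ ^ q x + mnorm (fun i l => G x i l - Gv x i l) ^ q x) := by
      have f1 : mnorm (fun i l => moll k G' x i l - Gv x i l) ≤
          3 * (‖moll k G' x - G' x‖ + mnorm (fun i l => G x i l - Gv x i l)) := by
        refine (mnorm_le_norm (by norm_num) (by norm_num) _).trans ?_
        have : ‖(fun i l => moll k G' x i l - Gv x i l : Mat 3 2)‖ ≤
            ‖moll k G' x - G' x‖ + ‖G x - Gv x‖ := by
          rw [hx]
          exact norm_sub_le_norm_sub_add_norm_sub (moll k G' x) (G x) (Gv x)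
        have f2 := norm_le_mnorm (G x - Gv x)
        have f3 : mnorm (G x - Gv x) = mnorm (fun i l => G x i l - Gv x i l) := rfl
        linarith
      have hm0 := mnorm_nonneg (fun i l => G x i l - Gv x i l)
      refine (Real.rpow_le_rpow (mnorm_nonneg _) f1 hq0).trans
        ((const_mul_rpow_le (by norm_num) (by positivity) (hqQ x hxω)).trans ?_)
      rw [hc, mul_assoc]
      exact mul_le_mul_of_nonneg_left (add_rpow_le_const (norm_nonneg _) hm0 hq0 (hqQ x hxω))
        (by positivity)
    have hm0 := Real.rpow_nonneg (mnorm_nonneg (fun i l => G x i l - Gv x i l)) (q x)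
    refine (add_le_add (ENNReal.ofReal_le_ofReal e1) (ENNReal.ofReal_le_ofReal e2)).trans ?_
    rw [ENNReal.ofReal_mul hc0, ENNReal.ofReal_mul hc0, ENNReal.ofReal_add (by positivity)
      (by positivity), ENNReal.ofReal_add (by positivity) hm0, ← mul_add]
    apply le_of_eq
    ring
  refine (lintegral_mono_ae hle).trans ?_
  rw [lintegral_const_mul' _ _ ENNReal.ofReal_ne_top, lintegral_add_left', mul_add]
  · exact (add_le_add hk.le hj.le).trans (ENNReal.add_halves δ).le
  · have m1 : AEMeasurable (fun x => ENNReal.ofReal (‖moll k w x - w x‖ ^ q x))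
        (volume.restrict ω) := by
      refine AEMeasurable.ennreal_ofReal (AEMeasurable.pow ?_ hqm.aemeasurable)
      exact ((contDiff_moll k hwi.locallyIntegrable).continuous.aestronglyMeasurable.sub
        hwm).norm.aemeasurable
    have m2 : AEMeasurable (fun x => ENNReal.ofReal (‖moll k G' x - G' x‖ ^ q x))
        (volume.restrict ω) := by
      refine AEMeasurable.ennreal_ofReal (AEMeasurable.pow ?_ hqm.aemeasurable)
      exact ((contDiff_moll k hGi.locallyIntegrable).continuous.aestronglyMeasurable.sub
        hGi.aestronglyMeasurable.restrict).norm.aemeasurable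
    exact m1.add m2

/-- Sequential form of `exists_smooth_approx`; along a subsequence the gradients also converge a.e. -/
lemma exists_smooth_seq {ω : Set (Euc 2)} (hω : IsOpen ω) (hfin : volume ω ≠ ⊤)
    {q : Euc 2 → ℝ} {Q : ℝ} (hQ : 0 ≤ Q) (hqm : Measurable q) (hq1 : ∀ x ∈ ω, 1 ≤ q x)
    (hqQ : ∀ x ∈ ω, q x ≤ Q) (hlog : LogHolder ω q) {v : Euc 2 → Euc 3} {Gv : Euc 2 → Mat 3 2}
    (hv : MemW1p0Planar ω q v Gv) :
    ∃ φ : ℕ → Euc 2 → Euc 3, (∀ j, ContDiff ℝ (⊤ : ℕ∞) (φ j) ∧ HasCompactSupport (φ j) ∧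
      tsupport (φ j) ⊆ ω) ∧
      Tendsto (fun j => ∫⁻ x in ω, ENNReal.ofReal (‖φ j x - v x‖ ^ q x)) atTop (𝓝 0) ∧
      Tendsto (fun j => ∫⁻ x in ω, ENNReal.ofReal
        (mnorm (fun i l => gradMat (φ j) x i l - Gv x i l) ^ q x)) atTop (𝓝 0) ∧
      ∀ᵐ x ∂(volume.restrict ω), Tendsto (fun j => gradMat (φ j) x) atTop (𝓝 (Gv x)) := by
  have h1 : ∀ j : ℕ, (0:ℝ≥0∞) < ((j:ℝ≥0∞) + 1)⁻¹ := fun j => by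
    simp
  choose φ a1 a2 a3 a4 using fun j => exists_smooth_approx hω hfin hQ hqm hq1 hqQ hlog hv (h1 j)
  have h0 : Tendsto (fun j : ℕ => ((j:ℝ≥0∞) + 1)⁻¹) atTop (𝓝 0) := by
    have := (tendsto_add_atTop_iff_nat 1).2 ENNReal.tendsto_inv_nat_nhds_zero
    simpa using this
  have b1 : Tendsto (fun j => ∫⁻ x in ω, ENNReal.ofReal (‖φ j x - v x‖ ^ q x)) atTop (𝓝 0) :=
    tendsto_of_tendsto_of_tendsto_of_le_of_le tendsto_const_nhds h0 (fun _ => zero_le)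
      (fun j => (lintegral_mono fun x => le_self_add).trans (a4 j))
  have b2 : Tendsto (fun j => ∫⁻ x in ω, ENNReal.ofReal
        (mnorm (fun i l => gradMat (φ j) x i l - Gv x i l) ^ q x)) atTop (𝓝 0) :=
    tendsto_of_tendsto_of_tendsto_of_le_of_le tendsto_const_nhds h0 (fun _ => zero_le)
      (fun j => (lintegral_mono fun x => le_add_self).trans (a4 j))
  have hGm : AEMeasurable Gv (volume.restrict ω) := aemeasurable_mat hv.1.2.1
  obtain ⟨ns, hns, hae⟩ := exists_subseq_ae_tendsto_zero (μ := volume.restrict ω)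
    (e := fun j x => mnorm (fun i l => gradMat (φ j) x i l - Gv x i l) ^ q x) (fun j => by
      refine AEMeasurable.aestronglyMeasurable (AEMeasurable.pow ?_ hqm.aemeasurable)
      refine continuous_mnorm.measurable.comp_aemeasurable ?_
      exact (continuous_gradMat ((a1 j).of_le (by exact_mod_cast le_top))).aemeasurable.sub hGm)
    (by
      refine b2.congr fun j => lintegral_congr fun x => ?_
      rw [abs_of_nonneg (Real.rpow_nonneg (mnorm_nonneg _) _)])
  refine ⟨fun j => φ (ns j), fun j => ⟨a1 _, a2 _, a3 _⟩, b1.comp hns.tendsto_atTop,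
    b2.comp hns.tendsto_atTop, ?_⟩
  filter_upwards [hae, ae_restrict_mem hω.measurableSet] with x hx hxω
  have hq0 : 0 < q x := by linarith [hq1 x hxω]
  rw [tendsto_iff_norm_sub_tendsto_zero]
  have h2 := hx.rpow_const (p := 1 / q x) (Or.inr (by positivity))
  rw [Real.zero_rpow (by positivity)] at h2
  refine squeeze_zero (fun _ => norm_nonneg _) (fun j => ?_) h2
  rw [← Real.rpow_mul (mnorm_nonneg _), mul_one_div_cancel hq0.ne', Real.rpow_one]
  exact norm_le_mnorm (gradMat (φ (ns j)) x - Gv x)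

/-- A bounded measurable function is an a.e. limit of uniformly bounded test functions. -/
lemma exists_smooth_bounded_approx {ω : Set (Euc 2)} (hω : IsOpen ω)
    (hωb : Bornology.IsBounded ω) {b : Euc 2 → Euc 3} (hbm : Measurable b) {R : ℝ}
    (hR : ∀ x, ‖b x‖ ≤ R) :
    ∃ β : ℕ → Euc 2 → Euc 3, (∀ j, ContDiff ℝ (⊤ : ℕ∞) (β j) ∧ HasCompactSupport (β j) ∧
      tsupport (β j) ⊆ ω) ∧ (∀ j x, ‖β j x‖ ≤ R) ∧
      ∀ᵐ x ∂(volume.restrict ω), Tendsto (fun j => β j x) atTop (𝓝 (b x)) := by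
  -- Mollify, and cut off along an exhaustion of `ω` by compact sets `T j`.
  obtain ⟨T, t1, t2, t3, t4⟩ := hω.exists_iUnion_isClosed
  choose χ c1 c2 c3 c4 c5 using fun j =>
    exists_cutoff (Metric.isCompact_of_isClosed_isBounded (t1 j) (hωb.subset (t2 j))) hω (t2 j)
  set g : Euc 2 → Euc 3 := ω.indicator b with hg
  have hR0 : 0 ≤ R := (norm_nonneg _).trans (hR 0)
  have hgR : ∀ x, ‖g x‖ ≤ R := fun x => (norm_indicator_le_norm_self _ _).trans (hR x)
  have hgi : Integrable g := by
    rw [hg, integrable_indicator_iff hω.measurableSet]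
    exact Measure.integrableOn_of_bounded (M := R) hωb.measure_lt_top.ne hbm.aestronglyMeasurable
      (ae_of_all _ hR)
  refine ⟨fun j x => χ j x • moll j g x, fun j => ⟨?_, ?_, ?_⟩, fun j x => ?_, ?_⟩
  · exact (c1 j).smul (contDiff_moll j hgi.locallyIntegrable)
  · exact (c2 j).smul_right
  · exact (tsupport_smul_subset_left _ _).trans (c3 j)
  · rw [norm_smul, Real.norm_of_nonneg (c5 j x).1]
    nlinarith [c5 j x, norm_moll_le j hgR x, norm_nonneg (moll j g x)]
  · filter_upwards [ae_restrict_of_ae (ae_tendsto_moll hgi.locallyIntegrable),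
      ae_restrict_mem hω.measurableSet] with x hx hxω
    rw [hg, indicator_of_mem hxω, ← hg] at hx
    refine hx.congr' ?_
    rw [← t3] at hxω
    obtain ⟨N, hN⟩ := mem_iUnion.1 hxω
    filter_upwards [eventually_ge_atTop N] with j hj
    rw [(c4 j x (t4 hj hN)).self_of_nhds, one_smul]

/-! ### The integrand and the planar approximation -/

/-- The Carathéodory integrand `f` may be replaced by one which is continuous for *every* `xα` and
on the whole of `ℝ × ℝ × ℝ^{3×3}`; the variables `y` and `q` are truncated. -/
lemma exists_caratheodory {ω : Set (Euc 2)} {f : Euc 2 → ℝ → ℝ → Mat 3 3 → ℝ}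
    (hfnn : ∀ xα y q ξ, 0 ≤ f xα y q ξ)
    (hfcont : ∀ᵐ xα ∂(volume.restrict ω),
      ContinuousOn (fun t : ℝ × ℝ × Mat 3 3 => f xα t.1 t.2.1 t.2.2)
        ((Set.Ioo (-(1/2):ℝ) (1/2)) ×ˢ ((Set.Ici (1:ℝ)) ×ˢ (Set.univ : Set (Mat 3 3)))))
    (hfmeas : ∀ (y q : ℝ) (ξ : Mat 3 3), Measurable fun xα => f xα y q ξ)
    {C₂ : ℝ} (hC₂ : 0 ≤ C₂)
    (hgrowth : ∀ᵐ xα ∂(volume.restrict ω), ∀ y ∈ Set.Ioo (-(1/2):ℝ) (1/2),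
      ∀ q ∈ Set.Ici (1:ℝ), ∀ ξ : Mat 3 3, f xα y q ξ ≤ C₂ * (mnorm ξ ^ q + 1)) :
    ∃ g : Euc 2 → ℝ × ℝ × Mat 3 3 → ℝ, (∀ x, Continuous (g x)) ∧
      Measurable (fun z : (ℝ × ℝ × Mat 3 3) × Euc 2 => g z.2 z.1) ∧ (∀ x t, 0 ≤ g x t) ∧
      (∀ x t, 1 ≤ t.2.1 → g x t ≤ C₂ * (mnorm t.2.2 ^ t.2.1 + 1)) ∧
      ∀ᵐ x ∂(volume.restrict ω), ∀ y q ξ, |y| ≤ 1/4 → 1 ≤ q → g x (y, q, ξ) = f x y q ξ := by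
  classical
  set S := {x | ¬ (ContinuousOn (fun t : ℝ × ℝ × Mat 3 3 => f x t.1 t.2.1 t.2.2)
        ((Set.Ioo (-(1/2):ℝ) (1/2)) ×ˢ ((Set.Ici (1:ℝ)) ×ˢ (Set.univ : Set (Mat 3 3)))) ∧
      ∀ y ∈ Set.Ioo (-(1/2):ℝ) (1/2), ∀ q ∈ Set.Ici (1:ℝ), ∀ ξ : Mat 3 3,
        f x y q ξ ≤ C₂ * (mnorm ξ ^ q + 1))} with hS
  -- `A` is a measurable conull set of points at which both hypotheses hold.
  set A := (toMeasurable (volume.restrict ω) S)ᶜ with hA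
  have hAm : MeasurableSet A := (measurableSet_toMeasurable _ _).compl
  have hAgood : ∀ x ∈ A, x ∉ S := fun x hx h => hx (subset_toMeasurable _ _ h)
  have hAae : ∀ᵐ x ∂(volume.restrict ω), x ∈ A := by
    rw [ae_iff]
    have : {x | x ∉ A} = toMeasurable (volume.restrict ω) S := by ext; simp [hA]
    rw [this, measure_toMeasurable]
    exact ae_iff.1 (hfcont.and hgrowth)
  -- A continuous retraction into the region of continuity, equal to the identity where `|y| ≤ 1/4`
  -- and `1 ≤ q`.
  set τ : ℝ × ℝ × Mat 3 3 → ℝ × ℝ × Mat 3 3 := fun t =>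
    (max (-(1/4)) (min (1/4) t.1), max 1 t.2.1, t.2.2) with hτ
  have hτc : Continuous τ := by fun_prop
  have hτm : ∀ t, τ t ∈ (Set.Ioo (-(1/2):ℝ) (1/2)) ×ˢ
      ((Set.Ici (1:ℝ)) ×ˢ (Set.univ : Set (Mat 3 3))) := by
    intro t
    refine ⟨⟨?_, ?_⟩, ?_, mem_univ _⟩
    · exact lt_of_lt_of_le (by norm_num : -(1/2:ℝ) < -(1/4)) (le_max_left _ _)
    · refine max_lt (by norm_num) (lt_of_le_of_lt (min_le_left _ _) (by norm_num))
    · exact le_max_left (1:ℝ) _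
  set g : Euc 2 → ℝ × ℝ × Mat 3 3 → ℝ := fun x t =>
    A.indicator (fun x => f x (τ t).1 (τ t).2.1 (τ t).2.2) x with hg
  have hgc : ∀ x, Continuous (g x) := by
    intro x
    by_cases hx : x ∈ A
    · have h1 := (not_not.1 (hAgood x hx)).1
      have h2 := h1.comp_continuous hτc hτm
      simp only [hg, indicator_of_mem hx]
      exact h2
    · simp only [hg, indicator_of_notMem hx]
      exact continuous_const
  refine ⟨g, hgc, ?_, fun x t => indicator_nonneg (fun _ _ => hfnn _ _ _ _) x, ?_, ?_⟩
  · exact measurable_uncurry_of_continuous_of_measurable (u := fun t x => g x t) hgc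
      (fun t => (hfmeas _ _ _).indicator hAm)
  · intro x t ht
    have h0 : 0 ≤ C₂ * (mnorm t.2.2 ^ t.2.1 + 1) := by
      have := Real.rpow_nonneg (mnorm_nonneg t.2.2) t.2.1
      positivity
    by_cases hx : x ∈ A
    · have h1 := (not_not.1 (hAgood x hx)).2 (τ t).1 (hτm t).1 (τ t).2.1 (hτm t).2.1 (τ t).2.2
      simp only [hg, indicator_of_mem hx]
      have h2 : (τ t).2.1 = t.2.1 := max_eq_right ht
      rw [h2] at h1 ⊢
      exact h1
    · simp only [hg, indicator_of_notMem hx]; exact h0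
  · filter_upwards [hAae] with x hx y q ξ hy hq
    simp only [hg, indicator_of_mem hx, hτ]
    rw [max_eq_right hq, min_eq_right (abs_le.1 hy).2, max_eq_right (by linarith [(abs_le.1 hy).1])]

lemma norm_coords_le (b : Euc 3) : ‖(fun i => b i : Fin 3 → ℝ)‖ ≤ ‖b‖ :=
  (pi_norm_le_iff_of_nonneg (norm_nonneg _)).2 fun i => PiLp.norm_apply_le b i

lemma mnorm_joinCols_le (A : Mat 3 2) (b : Euc 3) :
    mnorm (joinCols A (fun i => b i)) ≤ 3 * (‖A‖ + ‖b‖) := by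
  have h1 := mnorm_le_norm (le_refl 3) (le_refl 3) (joinCols A (fun i => b i))
  have h2 := norm_joinCols_le A (fun i => b i)
  linarith [norm_coords_le b]

lemma continuous_joinCols' : Continuous (fun t : Mat 3 2 × Euc 3 => joinCols t.1 (fun i => t.2 i)) :=
  continuous_joinCols.comp (continuous_fst.prodMk (by fun_prop))

/-- The infimum along a dense sequence is at most the infimum over the whole space. If `F` is not
bounded below, the real infimum on the right is `0`, but then some `F (d n)` is negative. -/
lemma iInf_dense_le_ofReal_iInf {X : Type*} [TopologicalSpace X] [Nonempty X] {d : ℕ → X}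
    (hd : DenseRange d) {F : X → ℝ} (hF : Continuous F) :
    ⨅ n, ENNReal.ofReal (F (d n)) ≤ ENNReal.ofReal (⨅ x, F x) := by
  set I := ⨅ n, ENNReal.ofReal (F (d n)) with hI
  have hcl : IsClosed {x | I ≤ ENNReal.ofReal (F x)} :=
    isClosed_le continuous_const (ENNReal.continuous_ofReal.comp hF)
  have hall : ∀ x, I ≤ ENNReal.ofReal (F x) := fun x =>
    hd.induction_on (p := fun x => I ≤ ENNReal.ofReal (F x)) x hcl (fun n => iInf_le _ n)
  have hItop : I ≠ ⊤ := ne_top_of_le_ne_top ENNReal.ofReal_ne_top (hall (d 0))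
  rcases eq_or_ne I 0 with h0 | h0
  · rw [h0]; exact zero_le
  have hpos : 0 < I.toReal := ENNReal.toReal_pos h0 hItop
  rw [← ENNReal.ofReal_toReal hItop]
  refine ENNReal.ofReal_le_ofReal (le_ciInf fun x => ?_)
  have h1 := hall x
  rw [← ENNReal.ofReal_toReal hItop] at h1
  exact (ENNReal.ofReal_le_ofReal_iff' .. |>.1 h1).resolve_right (not_le.2 hpos)

lemma exists_dense_seq_zero : ∃ d : ℕ → Euc 3, DenseRange d ∧ d 0 = 0 := by
  refine ⟨fun n => if n = 0 then 0 else TopologicalSpace.denseSeq (Euc 3) (n - 1), ?_, by simp⟩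
  refine (TopologicalSpace.denseRange_denseSeq (Euc 3)).mono ?_
  rintro _ ⟨n, rfl⟩
  exact ⟨n + 1, by simp⟩

/-- A planar limit map and the optimal transverse direction are simultaneously approximated, in
energy, by smooth compactly supported maps. -/
lemma exists_planar_approx {ω : Set (Euc 2)} (hω : IsOpen ω) (hωb : Bornology.IsBounded ω)
    {q : Euc 2 → ℝ} {Q : ℝ} (hQ : 0 ≤ Q) (hqm : Measurable q) (hq1 : ∀ x ∈ ω, 1 ≤ q x)
    (hqQ : ∀ x ∈ ω, q x ≤ Q) (hlog : LogHolder ω q) {v : Euc 2 → Euc 3} {Gv : Euc 2 → Mat 3 2}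
    (hv : MemW1p0Planar ω q v Gv) {f : Euc 2 → ℝ → ℝ → Mat 3 3 → ℝ}
    {g : Euc 2 → ℝ × ℝ × Mat 3 3 → ℝ} {C₂ : ℝ} (hC₂ : 0 ≤ C₂)
    (hgc : ∀ x, Continuous (g x))
    (hgm : Measurable (fun z : (ℝ × ℝ × Mat 3 3) × Euc 2 => g z.2 z.1))
    (hgle : ∀ x t, 1 ≤ t.2.1 → g x t ≤ C₂ * (mnorm t.2.2 ^ t.2.1 + 1))
    (hgf : ∀ᵐ x ∂(volume.restrict ω), ∀ y q ξ, |y| ≤ 1/4 → 1 ≤ q → g x (y, q, ξ) = f x y q ξ)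
    {c δ : ℝ≥0∞} (hc : ∫⁻ x in ω, ENNReal.ofReal (finf f x 0 (q x) (Gv x)) < c) (hδ : 0 < δ) :
    ∃ φ b : Euc 2 → Euc 3, (ContDiff ℝ (⊤ : ℕ∞) φ ∧ HasCompactSupport φ ∧ tsupport φ ⊆ ω) ∧
      (ContDiff ℝ (⊤ : ℕ∞) b ∧ HasCompactSupport b ∧ tsupport b ⊆ ω) ∧
      ∫⁻ x in ω, ENNReal.ofReal (‖φ x - v x‖ ^ q x) < δ ∧
      ∫⁻ x in ω, ENNReal.ofReal (g x (0, q x, joinCols (gradMat φ x) (fun i => b x i))) < c := by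
  have hfin : volume ω ≠ ⊤ := hωb.measure_lt_top.ne
  have hGm : AEMeasurable Gv (volume.restrict ω) := aemeasurable_mat hv.1.2.1
  have hmn : AEMeasurable (fun x => mnorm (Gv x)) (volume.restrict ω) :=
    continuous_mnorm.measurable.comp_aemeasurable hGm
  have hGfin : ∫⁻ x in ω, ENNReal.ofReal (mnorm (Gv x) ^ q x) < ⊤ := hv.1.2.2.2.2
  have hGint : IntegrableOn (fun x => mnorm (Gv x) ^ q x) ω := by
    refine ⟨(hmn.pow hqm.aemeasurable).aestronglyMeasurable, ?_⟩
    rw [hasFiniteIntegral_iff_ofReal (ae_of_all _ fun x => Real.rpow_nonneg (mnorm_nonneg _) _)]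
    exact hGfin
  have hmq0 : ∀ x, 0 ≤ mnorm (Gv x) ^ q x := fun x => Real.rpow_nonneg (mnorm_nonneg _) _
  obtain ⟨d, hd, hd0⟩ := exists_dense_seq_zero
  set Gv' := hGm.mk Gv with hGv'
  have hGv'm : Measurable Gv' := hGm.measurable_mk
  have hGG : ∀ᵐ x ∂(volume.restrict ω), Gv x = Gv' x := hGm.ae_eq_mk
  have hmeas : ∀ (G : Euc 2 → Mat 3 2) (b : Euc 2 → Euc 3), Measurable G → Measurable b →
      Measurable (fun x => ENNReal.ofReal (g x (0, q x, joinCols (G x) (fun i => b x i)))) := by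
    intro G b hG hb
    refine (hgm.comp (Measurable.prodMk (Measurable.prodMk measurable_const
      (Measurable.prodMk hqm ?_)) measurable_id)).ennreal_ofReal
    exact continuous_joinCols'.measurable.comp (hG.prodMk hb)
  set a : ℕ → Euc 2 → ℝ≥0∞ := fun n x =>
    ENNReal.ofReal (g x (0, q x, joinCols (Gv' x) (fun i => d n i))) with ha
  -- the bound for `g` along `(A, b)` in terms of `Gv` and of the error `A - Gv`
  have hbound : ∀ (R : ℝ), 0 ≤ R → ∀ x ∈ ω, ∀ (A : Mat 3 2) (b : Euc 3), ‖b‖ ≤ R →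
      g x (0, q x, joinCols A (fun i => b i)) ≤
        C₂ * (3 ^ Q * 2 ^ Q * (2 ^ Q * (mnorm (Gv x) ^ q x + (1 + R) ^ Q)) + 1)
        + C₂ * (3 ^ Q * 2 ^ Q) * mnorm (fun i l => A i l - Gv x i l) ^ q x := by
    intro R hR x hx A b hb
    have hq := hq1 x hx
    have hq0 : 0 ≤ q x := by linarith
    have hqx := hqQ x hx
    have m1 := mnorm_nonneg (Gv x)
    have m2 := mnorm_nonneg (fun i l => A i l - Gv x i l)
    refine (hgle x _ hq).trans ?_
    simp only
    have e1 : mnorm (joinCols A (fun i => b i)) ≤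
        3 * ((mnorm (Gv x) + R) + mnorm (fun i l => A i l - Gv x i l)) := by
      refine (mnorm_joinCols_le A b).trans ?_
      have f1 : ‖A‖ ≤ ‖Gv x‖ + ‖A - Gv x‖ := by
        have := norm_add_le (Gv x) (A - Gv x)
        rwa [add_sub_cancel] at this
      have f2 := norm_le_mnorm (Gv x)
      have f3 : ‖A - Gv x‖ ≤ mnorm (fun i l => A i l - Gv x i l) := norm_le_mnorm (A - Gv x)
      linarith
    have e2 := (Real.rpow_le_rpow (mnorm_nonneg _) e1 hq0).trans
      (const_mul_rpow_le (by norm_num) (by positivity) hqx)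
    have e3 := add_rpow_le_const (add_nonneg m1 hR) m2 hq0 hqx
    have e4 := add_rpow_le_const m1 hR hq0 hqx
    have e5 := rpow_le_one_add_pow hR le_rfl hq0 hqx
    have h2Q : (0:ℝ) ≤ 2 ^ Q := by positivity
    have h3Q : (0:ℝ) ≤ 3 ^ Q := by positivity
    have e6 : mnorm (joinCols A (fun i => b i)) ^ q x ≤
        3 ^ Q * (2 ^ Q * (2 ^ Q * (mnorm (Gv x) ^ q x + (1 + R) ^ Q)
          + mnorm (fun i l => A i l - Gv x i l) ^ q x)) := by
      refine e2.trans (mul_le_mul_of_nonneg_left (e3.trans (mul_le_mul_of_nonneg_left ?_ h2Q)) h3Q)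
      have := mul_le_mul_of_nonneg_left e5 h2Q
      nlinarith
    have e7 := mul_le_mul_of_nonneg_left e6 hC₂
    nlinarith
  have hBfin : ∀ R : ℝ, 0 ≤ R → ∫⁻ x in ω, ENNReal.ofReal
      (C₂ * (3 ^ Q * 2 ^ Q * (2 ^ Q * (mnorm (Gv x) ^ q x + (1 + R) ^ Q)) + 1)) ≠ ⊤ := by
    intro R hR
    have hB : IntegrableOn (fun x =>
        C₂ * (3 ^ Q * 2 ^ Q * (2 ^ Q * (mnorm (Gv x) ^ q x + (1 + R) ^ Q)) + 1)) ω :=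
      ((((hGint.add (integrableOn_const hfin)).const_mul _).const_mul _).add
        (integrableOn_const hfin)).const_mul _
    rw [← ofReal_integral_eq_lintegral_ofReal hB
      (ae_of_all _ fun x => by have := hmq0 x; positivity)]
    exact ENNReal.ofReal_ne_top
  obtain ⟨N, ν, hν, hνN, hνc⟩ := exists_measurable_selection (μ := volume.restrict ω) a
    (fun n => hmeas _ _ hGv'm measurable_const) (by
      refine ne_top_of_le_ne_top (hBfin 0 le_rfl) (lintegral_mono_ae ?_)
      filter_upwards [hGG, ae_restrict_mem hω.measurableSet] with x hx hxω
      have h1 := hbound 0 le_rfl x hxω (Gv' x) (d 0) (by rw [hd0, norm_zero])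
      have h2 : mnorm (fun i l => Gv' x i l - Gv x i l) ^ q x = 0 := by
        rw [← hx]
        have hm : mnorm (fun i l => Gv x i l - Gv x i l) = 0 := by simp [mnorm]
        rw [hm, Real.zero_rpow (by linarith [hq1 x hxω])]
      rw [h2, mul_zero, add_zero] at h1
      exact ENNReal.ofReal_le_ofReal h1) (c := c) (by
      refine lt_of_le_of_lt (lintegral_mono_ae ?_) hc
      filter_upwards [hGG, hgf, ae_restrict_mem hω.measurableSet] with x hx hgx hxω
      have hinf : finf f x 0 (q x) (Gv x) =
          ⨅ b : Euc 3, g x (0, q x, joinCols (Gv' x) (fun i => b i)) := by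
        rw [finf, ← hx]
        refine Equiv.iInf_congr (WithLp.equiv 2 (Fin 3 → ℝ)).symm fun b => ?_
        exact hgx 0 _ _ (by norm_num) (hq1 x hxω)
      rw [hinf]
      refine iInf_dense_le_ofReal_iInf hd
        (F := fun b : Euc 3 => g x (0, q x, joinCols (Gv' x) (fun i => b i))) ?_
      exact (hgc x).comp (continuous_const.prodMk (continuous_const.prodMk
        (continuous_joinCols'.comp (continuous_const.prodMk continuous_id)))))
  -- The selected transverse direction takes finitely many values, hence is bounded.
  set b0 : Euc 2 → Euc 3 := fun x => d (ν x) with hb0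
  have hb0m : Measurable b0 := (measurable_from_nat (f := d)).comp hν
  set R : ℝ := ∑ n ∈ Finset.range (N + 1), ‖d n‖ with hR
  have hR0 : 0 ≤ R := Finset.sum_nonneg fun _ _ => norm_nonneg _
  have hb0R : ∀ x, ‖b0 x‖ ≤ R := fun x =>
    Finset.single_le_sum (f := fun n => ‖d n‖) (fun _ _ => norm_nonneg _)
      (Finset.mem_range.2 (Nat.lt_succ_of_le (hνN x)))
  obtain ⟨β, hβ1, hβ2, hβ3⟩ := exists_smooth_bounded_approx hω hωb hb0m hb0R
  obtain ⟨φ, hφ1, hφ2, hφ3, hφ4⟩ := exists_smooth_seq hω hfin hQ hqm hq1 hqQ hlog hv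
  have hφc : ∀ j, Measurable (gradMat (φ j)) := fun j =>
    (continuous_gradMat ((hφ1 j).1.of_le (by exact_mod_cast le_top))).measurable
  have hlim : limsup (fun j => ∫⁻ x in ω, ENNReal.ofReal
      (g x (0, q x, joinCols (gradMat (φ j) x) (fun i => β j x i)))) atTop ≤
      ∫⁻ x in ω, a (ν x) x := by
    refine limsup_lintegral_le_of_dominated (B := fun x => ENNReal.ofReal
      (C₂ * (3 ^ Q * 2 ^ Q * (2 ^ Q * (mnorm (Gv x) ^ q x + (1 + R) ^ Q)) + 1)))
      (E := fun j x => ENNReal.ofReal (C₂ * (3 ^ Q * 2 ^ Q)) *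
        ENNReal.ofReal (mnorm (fun i l => gradMat (φ j) x i l - Gv x i l) ^ q x))
      (fun j => (hmeas _ _ (hφc j) (hβ1 j).1.continuous.measurable).aemeasurable) ?_
      (fun j => ?_) (hBfin R hR0) ?_ ?_
    · have := hGint.aemeasurable
      fun_prop
    · filter_upwards [ae_restrict_mem hω.measurableSet] with x hxω
      have h1 := hbound R hR0 x hxω (gradMat (φ j) x) (β j x) (hβ2 j x)
      rw [← ENNReal.ofReal_mul (by positivity)]
      exact (ENNReal.ofReal_le_ofReal h1).trans ENNReal.ofReal_add_le
    · simp_rw [lintegral_const_mul' _ _ ENNReal.ofReal_ne_top]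
      simpa using ENNReal.Tendsto.const_mul hφ3 (Or.inr ENNReal.ofReal_ne_top)
    · filter_upwards [hφ4, hβ3, hGG] with x h1 h2 h3
      simp only [ha]
      rw [← h3]
      refine (ENNReal.continuous_ofReal.tendsto _).comp (((hgc x).tendsto _).comp ?_)
      refine tendsto_const_nhds.prodMk_nhds (tendsto_const_nhds.prodMk_nhds ?_)
      exact (continuous_joinCols'.tendsto (Gv x, b0 x)).comp (h1.prodMk_nhds h2)
  obtain ⟨j, hj1, hj2⟩ := ((eventually_lt_of_limsup_lt (hlim.trans_lt hνc)).and
    (hφ2.eventually_lt_const hδ)).exists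
  exact ⟨φ j, β j, hφ1 j, hβ1 j, hj2, hj1⟩

/-! ### Admissibility of smooth maps on the thin domain -/

lemma scaleX_apply (ε : ℝ) (x : Euc 3) (i : Fin 3) :
    scaleX ε x i = if i = 2 then ε * x 2 else x i := by
  simp [scaleX, updCoord, Function.update_apply]

/-- The vertical rescaling as a linear automorphism. -/
def scaleE (ε : ℝ) (hε : ε ≠ 0) : Euc 3 ≃ₗ[ℝ] Euc 3 where
  toFun := scaleX ε
  invFun := scaleX ε⁻¹
  map_add' x y := by
    ext i
    simp only [PiLp.add_apply, scaleX_apply]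
    split_ifs <;> ring
  map_smul' c x := by
    ext i
    simp only [PiLp.smul_apply, scaleX_apply, smul_eq_mul, RingHom.id_apply]
    split_ifs <;> ring
  left_inv x := by
    ext i
    fin_cases i <;> simp [scaleX_apply, hε]
  right_inv x := by
    ext i
    fin_cases i <;> simp [scaleX_apply, hε]

lemma continuous_scaleX (ε : ℝ) : Continuous (scaleX ε) := by
  refine (PiLp.continuous_toLp 2 _).comp (continuous_pi fun i => ?_)
  simp only [Function.update_apply]
  split_ifs
  · fun_prop
  · exact (EuclideanSpace.proj i : Euc 3 →L[ℝ] ℝ).continuous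

lemma projα_apply0 (x : Euc 3) : projα x 0 = x 0 := rfl

lemma projα_apply1 (x : Euc 3) : projα x 1 = x 1 := rfl

lemma projα_scaleX (ε : ℝ) (x : Euc 3) : projα (scaleX ε x) = projα x := by
  ext i; fin_cases i <;> simp [projα_apply0, projα_apply1, scaleX_apply]

lemma scaleX_mem {ω : Set (Euc 2)} {ε : ℝ} (h0 : 0 < ε) (h1 : ε ≤ 1) {x : Euc 3}
    (hx : x ∈ thinDomain ω) : scaleX ε x ∈ thinDomain ω := by
  obtain ⟨a, b, c⟩ := hx
  refine ⟨by rwa [projα_scaleX], ?_, ?_⟩ <;> rw [scaleX_apply, if_pos rfl] <;> nlinarith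

lemma isOpen_thinDomain {ω : Set (Euc 2)} (hω : IsOpen ω) :
    IsOpen (thinDomain ω) :=
  (hω.preimage continuous_projα).inter
    (isOpen_Ioo.preimage (EuclideanSpace.proj 2 : Euc 3 →L[ℝ] ℝ).continuous)

lemma isBounded_thinDomain {ω : Set (Euc 2)} (hωb : Bornology.IsBounded ω) :
    Bornology.IsBounded (thinDomain ω) := by
  obtain ⟨C, hC⟩ := isBounded_iff_forall_norm_le.1 hωb
  refine isBounded_iff_forall_norm_le.2 ⟨C + 1, fun x hx => ?_⟩
  have h1 := hC _ hx.1
  have h2 : ‖x‖ ^ 2 = ‖projα x‖ ^ 2 + (x 2) ^ 2 := by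
    rw [EuclideanSpace.norm_sq_eq, EuclideanSpace.norm_sq_eq, Fin.sum_univ_three,
      Fin.sum_univ_two]
    simp [projα_apply0, projα_apply1]
  have h3 : |x 2| ≤ 1 := abs_le.2 ⟨by linarith [hx.2.1], by linarith [hx.2.2]⟩
  have h4 : (x 2)^2 ≤ 1 := by rw [← sq_abs]; nlinarith [abs_nonneg (x 2)]
  refine abs_le_of_sq_le_sq' ?_ (by linarith [norm_nonneg (projα x)]) |>.2
  nlinarith [norm_nonneg (projα x)]

/-- A property valid a.e. on the thin domain is valid a.e. along the vertical rescaling. -/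
lemma ae_scaleX {ω : Set (Euc 2)} (hω : IsOpen ω) {P : Euc 3 → Prop}
    (h : ∀ᵐ x ∂(volume.restrict (thinDomain ω)), P x) {ε : ℝ} (h0 : 0 < ε) (h1 : ε ≤ 1) :
    ∀ᵐ x ∂(volume.restrict (thinDomain ω)), P (scaleX ε x) := by
  have hm := (isOpen_thinDomain hω).measurableSet
  rw [ae_restrict_iff' hm] at h ⊢
  have h2 := Measure.addHaar_preimage_linearMap (volume : Measure (Euc 3))
    (f := (scaleE ε h0.ne' : Euc 3 →ₗ[ℝ] Euc 3)) (LinearEquiv.isUnit_det' _).ne_zero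
    {x | ¬ (x ∈ thinDomain ω → P x)}
  rw [ae_iff.1 h, mul_zero] at h2
  refine measure_mono_null ?_ h2
  intro x hx hcon
  exact hx fun hxm => hcon (scaleX_mem h0 h1 hxm)

/-- Nonemptiness of `ω` and the bounds on `p` keep the essential infimum from being a junk value. -/
lemma pminus_pos {ω : Set (Euc 2)} (hω : IsOpen ω) (hne : ω.Nonempty) {p : Euc 3 → ℝ}
    (hp : IsPb (thinDomain ω) p) : 0 < pminus ω p := by
  obtain ⟨-, pm, pM, h1, h2⟩ := hp
  have hpos : 0 < volume (thinDomain ω) := by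
    refine (isOpen_thinDomain hω).measure_pos _ ?_
    obtain ⟨y, hy⟩ := hne
    refine ⟨embed3 y 0, ?_, ?_⟩
    · have : projα (embed3 y 0) = y := by
        ext i; fin_cases i <;> rfl
      rwa [this]
    · change (0:ℝ) ∈ _
      norm_num
  have : (ae (volume.restrict (thinDomain ω))).NeBot := by
    rw [ae_neBot]
    intro h
    rw [Measure.restrict_eq_zero] at h
    exact hpos.ne' h
  have h3 : pm ≤ pminus ω p := by
    refine le_liminf_of_le ?_ (h2.mono fun x hx => hx.1)
    refine IsBoundedUnder.isCoboundedUnder_ge ?_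
    exact ⟨pM, by simpa using h2.mono fun x hx => hx.2⟩
  linarith

/-- Continuous functions have finite modular, since the thin domain and the exponent are bounded. -/
lemma emod_lt_top {ω : Set (Euc 2)} (hω : IsOpen ω) (hωb : Bornology.IsBounded ω) {p : Euc 3 → ℝ}
    (hp : IsPb (thinDomain ω) p) {ε : ℝ} (h0 : 0 < ε) (h1 : ε ≤ 1) {F : Euc 3 → ℝ}
    (hF : Continuous F) (hF0 : ∀ x, 0 ≤ F x) :
    emod (thinDomain ω) (fun x => p (scaleX ε x)) F < ⊤ := by
  obtain ⟨-, pm, pM, hpm, h2⟩ := hp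
  obtain ⟨M, hM⟩ := (isBounded_thinDomain hωb).isCompact_closure.exists_bound_of_continuousOn
    hF.continuousOn
  have hfin := (isBounded_thinDomain hωb).measure_lt_top (μ := volume)
  refine lt_of_le_of_lt (b := ∫⁻ x in thinDomain ω, ENNReal.ofReal ((1 + M) ^ pM))
    (lintegral_mono_ae ?_) ?_
  · filter_upwards [ae_scaleX hω h2 h0 h1,
      ae_restrict_mem (isOpen_thinDomain hω).measurableSet] with x hx hxω
    refine ENNReal.ofReal_le_ofReal (rpow_le_one_add_pow (hF0 x) ?_ (by linarith [hx.1]) hx.2)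
    exact (le_abs_self _).trans (hM x (subset_closure hxω))
  · rw [setLIntegral_const]
    exact ENNReal.mul_lt_top ENNReal.ofReal_lt_top hfin

/-- A `C¹` map vanishing outside the cylinder over a compact `K ⊆ ω` is admissible: it vanishes near
the lateral boundary, so the constant sequence witnesses its lateral zero trace. -/
lemma sobAdm_of_smooth {ω : Set (Euc 2)} (hω : IsOpen ω) (hωb : Bornology.IsBounded ω)
    (hne : ω.Nonempty) {p : Euc 3 → ℝ} (hp : IsPb (thinDomain ω) p) {ε : ℝ} (h0 : 0 < ε)
    (h1 : ε ≤ 1) {u : Euc 3 → Euc 3} (hu : ContDiff ℝ 1 u) {K : Set (Euc 2)} (hK : IsCompact K)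
    (hKω : K ⊆ ω) (huK : ∀ x, projα x ∉ K → u x = 0) : SobAdm ω p ε u (gradMat u) := by
  have hc := continuous_gradMat hu
  have hcij : ∀ i j, Continuous fun x => gradMat u x i j := fun i j =>
    (continuous_apply j).comp ((continuous_apply i).comp hc)
  refine ⟨hu.continuous.aestronglyMeasurable, fun i j => (hcij i j).aemeasurable,
    isWeakGrad_gradMat hu _, ?_, emod_lt_top hω hωb hp h0 h1 hu.continuous.norm
      fun _ => norm_nonneg _, emod_lt_top hω hωb hp h0 h1 (continuous_mnorm.comp hc)
      fun _ => mnorm_nonneg _⟩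
  refine ⟨fun _ => u, fun _ => gradMat u, fun _ => isWeakGrad_gradMat hu _,
    fun _ => hu.continuous.locallyIntegrable, fun _ i l => (hcij i l).locallyIntegrable,
    fun _ => ⟨projα ⁻¹' Kᶜ, hK.isClosed.isOpen_compl.preimage continuous_projα, ?_,
      fun x hx => huK x hx⟩, ?_⟩
  · intro x hx hxK
    have := hx.1
    rw [hω.frontier_eq] at this
    exact this.2 (hKω hxK)
  · have hr := (pminus_pos hω hne hp).ne'
    have hm : mnorm (fun (_ : Fin 3) (_ : Fin 3) => (0 : ℝ)) = 0 := by simp [mnorm]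
    simp [hm, Real.zero_rpow hr]

/-! ### The recovery sequence -/

/-- The thin-film ansatz `φ(x_α) + ε x₃ b(x_α)`, whose rescaled transverse derivative is `b`. -/
def recov (ε : ℝ) (φ b : Euc 2 → Euc 3) (x : Euc 3) : Euc 3 :=
  φ (projα x) + (ε * x 2) • b (projα x)

lemma contDiff_recov (ε : ℝ) {φ b : Euc 2 → Euc 3} (hφ : ContDiff ℝ 1 φ) (hb : ContDiff ℝ 1 b) :
    ContDiff ℝ 1 (recov ε φ b) := by
  have h1 : ContDiff ℝ 1 projα := projL.contDiff
  have h2 : ContDiff ℝ 1 fun x : Euc 3 => x 2 :=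
    (EuclideanSpace.proj 2 : Euc 3 →L[ℝ] ℝ).contDiff
  exact (hφ.comp h1).add ((contDiff_const.mul h2).smul (hb.comp h1))

lemma projα_single (j : Fin 3) : projα (EuclideanSpace.single j (1 : ℝ)) =
    if h : (j : ℕ) < 2 then EuclideanSpace.single ⟨j, h⟩ (1 : ℝ) else 0 := by
  ext i
  fin_cases j <;> fin_cases i <;> simp [projα]

/-- The rescaled gradient of the ansatz is `(∇φ + ε x₃ ∇b | b)`. -/
lemma scaleCol_gradMat_recov {ε : ℝ} (hε : ε ≠ 0) {φ b : Euc 2 → Euc 3} (hφ : ContDiff ℝ 1 φ)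
    (hb : ContDiff ℝ 1 b) (x : Euc 3) :
    scaleCol ε (gradMat (recov ε φ b) x) =
      joinCols (gradMat φ (projα x) + (ε * x 2) • gradMat b (projα x))
        (fun i => b (projα x) i) := by
  have e1 : HasFDerivAt (fun x : Euc 3 => φ (projα x))
      ((fderiv ℝ φ (projα x)).comp projL) x :=
    ((hφ.differentiable one_ne_zero) _).hasFDerivAt.comp x projL.hasFDerivAt
  have e2 : HasFDerivAt (fun x : Euc 3 => b (projα x))
      ((fderiv ℝ b (projα x)).comp projL) x :=
    ((hb.differentiable one_ne_zero) _).hasFDerivAt.comp x projL.hasFDerivAt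
  have e3 : HasFDerivAt (fun x : Euc 3 => ε * x 2)
      (ε • (EuclideanSpace.proj 2 : Euc 3 →L[ℝ] ℝ)) x :=
    (EuclideanSpace.proj 2 : Euc 3 →L[ℝ] ℝ).hasFDerivAt.const_mul ε
  have e4 := (e1.add (e3.smul e2)).fderiv
  ext i j
  have e5 : fderiv ℝ (recov ε φ b) x = _ := e4
  simp only [scaleCol, gradMat, joinCols, e5, Pi.add_apply, Pi.smul_apply]
  simp only [add_apply, ContinuousLinearMap.comp_apply, projL_apply,
    smul_apply, ContinuousLinearMap.smulRight_apply, projα_single]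
  fin_cases j <;> simp [hε]

lemma exists_bound_on {n : ℕ} {E : Type*} [SeminormedAddCommGroup E] {ω : Set (Euc n)}
    (hωb : Bornology.IsBounded ω) {F : Euc n → E} (hF : Continuous F) :
    ∃ M, 0 ≤ M ∧ ∀ x ∈ ω, ‖F x‖ ≤ M := by
  obtain ⟨M, hM⟩ := hωb.isCompact_closure.exists_bound_of_continuousOn hF.continuousOn
  exact ⟨max M 0, le_max_right _ _, fun x hx => (hM x (subset_closure hx)).trans (le_max_left _ _)⟩

/-- The energies of the ansatz converge, by dominated convergence along a.e. convergent
subsequences of the exponents. -/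
lemma energy_recov {ω : Set (Euc 2)} (hω : IsOpen ω) (hωb : Bornology.IsBounded ω)
    {p : Euc 3 → ℝ} (hp : IsPb (thinDomain ω) p) {q : Euc 2 → ℝ} (hqm : Measurable q)
    {εs : ℕ → ℝ} (hεpos : ∀ k, 0 < εs k) (hεs : Tendsto εs atTop (𝓝 0))
    (hpconv : TendstoL1 (thinDomain ω) (fun k x => p (scaleX (εs k) x)) (fun x => q (projα x)))
    {C₂ : ℝ} (hC₂ : 0 ≤ C₂) {g : Euc 2 → ℝ × ℝ × Mat 3 3 → ℝ} (hgc : ∀ x, Continuous (g x))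
    (hgm : Measurable (fun z : (ℝ × ℝ × Mat 3 3) × Euc 2 => g z.2 z.1))
    (hgle : ∀ x t, 1 ≤ t.2.1 → g x t ≤ C₂ * (mnorm t.2.2 ^ t.2.1 + 1))
    {φ b : Euc 2 → Euc 3} (hφ : ContDiff ℝ 1 φ) (hb : ContDiff ℝ 1 b) :
    Tendsto (fun k => ∫⁻ x in thinDomain ω, ENNReal.ofReal (g (projα x)
        (εs k * x 2, p (scaleX (εs k) x),
          joinCols (gradMat φ (projα x) + (εs k * x 2) • gradMat b (projα x))
            (fun i => b (projα x) i)))) atTop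
      (𝓝 (∫⁻ x in ω, ENNReal.ofReal
        (g x (0, q x, joinCols (gradMat φ x) (fun i => b x i))))) := by
  have hgφ := continuous_gradMat hφ
  have hgb := continuous_gradMat hb
  have hx2 : Continuous fun x : Euc 3 => x 2 :=
    (EuclideanSpace.proj 2 : Euc 3 →L[ℝ] ℝ).continuous
  have hps : ∀ k, Measurable fun x => p (scaleX (εs k) x) := fun k =>
    hp.1.comp (continuous_scaleX _).measurable
  have hJ : ∀ k, Continuous fun x : Euc 3 =>
      joinCols (gradMat φ (projα x) + (εs k * x 2) • gradMat b (projα x))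
            (fun i => b (projα x) i) := fun k =>
    continuous_joinCols'.comp (((hgφ.comp continuous_projα).add
      ((continuous_const.mul hx2).smul (hgb.comp continuous_projα))).prodMk
      (hb.continuous.comp continuous_projα))
  have hmp := measurePreserving_projα hω.measurableSet
  have hlim : ∫⁻ x in ω, ENNReal.ofReal (g x (0, q x, joinCols (gradMat φ x) (fun i => b x i))) =
      ∫⁻ x in thinDomain ω, ENNReal.ofReal (g (projα x) (0, q (projα x),
        joinCols (gradMat φ (projα x)) (fun i => b (projα x) i))) := by
    refine (hmp.lintegral_comp (f := fun x => ENNReal.ofReal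
      (g x (0, q x, joinCols (gradMat φ x) (fun i => b x i)))) ?_).symm
    refine ENNReal.measurable_ofReal.comp (hgm.comp (Measurable.prodMk ?_ measurable_id))
    refine measurable_const.prodMk (hqm.prodMk ?_)
    exact (continuous_joinCols'.comp (hgφ.prodMk hb.continuous)).measurable
  rw [hlim]
  obtain ⟨Mφ, hMφ0, hMφ⟩ := exists_bound_on hωb hgφ
  obtain ⟨Mb, hMb0, hMb⟩ := exists_bound_on hωb hgb
  obtain ⟨M0, hM00, hM0⟩ := exists_bound_on hωb hb.continuous
  obtain ⟨pm, pM, hpm, hpb⟩ := hp.2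
  have hfin := (isBounded_thinDomain hωb).measure_lt_top (μ := volume)
  refine tendsto_of_subseq_tendsto fun ns hns => ?_
  have hε1 : Tendsto (fun n => εs (ns n)) atTop (𝓝 0) := hεs.comp hns
  obtain ⟨ms, hms, hae⟩ := exists_subseq_ae_tendsto_zero (μ := volume.restrict (thinDomain ω))
    (e := fun n x => p (scaleX (εs (ns n)) x) - q (projα x))
    (fun n => ((hps _).sub (hqm.comp continuous_projα.measurable)).aestronglyMeasurable)
    (hpconv.comp hns)
  have hε2 : Tendsto (fun n => εs (ns (ms n))) atTop (𝓝 0) := hε1.comp hms.tendsto_atTop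
  refine ⟨ms, ?_⟩
  refine tendsto_lintegral_filter_of_dominated_convergence
    (fun _ => ENNReal.ofReal (C₂ * ((1 + 3 * (Mφ + Mb + M0)) ^ pM + 1)))
    (Eventually.of_forall fun n => ?_) ?_ ?_ ?_
  · refine ENNReal.measurable_ofReal.comp
      (hgm.comp (Measurable.prodMk ?_ continuous_projα.measurable))
    exact (continuous_const.mul hx2).measurable.prodMk ((hps _).prodMk (hJ _).measurable)
  · filter_upwards [hε2.eventually_le_const one_pos] with n hn
    filter_upwards [ae_scaleX hω hpb (hεpos _) hn,
      ae_restrict_mem (isOpen_thinDomain hω).measurableSet] with x hx hxω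
    refine ENNReal.ofReal_le_ofReal ((hgle _ _ (by simp only; linarith [hx.1])).trans ?_)
    refine mul_le_mul_of_nonneg_left (add_le_add_left ?_ _) hC₂
    refine rpow_le_one_add_pow (mnorm_nonneg _) ?_ (by simp only; linarith [hx.1]) hx.2
    refine (mnorm_joinCols_le _ _).trans ?_
    have h1 : ‖(εs (ns (ms n)) * x 2) • gradMat b (projα x)‖ ≤ Mb := by
      rw [norm_smul]
      refine (mul_le_of_le_one_left (norm_nonneg _) ?_).trans (hMb _ hxω.1)
      have h2 := hεpos (ns (ms n))
      obtain ⟨-, h3, h4⟩ := hxω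
      rw [Real.norm_eq_abs, abs_le]
      constructor <;> nlinarith
    have h2 := norm_add_le (gradMat φ (projα x)) ((εs (ns (ms n)) * x 2) • gradMat b (projα x))
    have h3 := hMφ _ hxω.1
    have h4 := hM0 _ hxω.1
    linarith
  · rw [setLIntegral_const]
    exact (ENNReal.mul_lt_top ENNReal.ofReal_lt_top hfin).ne
  · filter_upwards [hae] with x hx
    refine (ENNReal.continuous_ofReal.tendsto _).comp (((hgc _).tendsto _).comp ?_)
    have h1 : Tendsto (fun n => εs (ns (ms n)) * x 2) atTop (𝓝 0) := by
      simpa using hε2.mul_const (x 2)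
    have h2 : Tendsto (fun n => p (scaleX (εs (ns (ms n))) x)) atTop (𝓝 (q (projα x))) := by
      simpa using hx.add_const (q (projα x))
    refine h1.prodMk_nhds (h2.prodMk_nhds ?_)
    have h3 : Tendsto (fun n => gradMat φ (projα x) +
        (εs (ns (ms n)) * x 2) • gradMat b (projα x)) atTop (𝓝 (gradMat φ (projα x))) := by
      simpa using (h1.smul_const (gradMat b (projα x))).const_add (gradMat φ (projα x))
    exact (continuous_joinCols'.tendsto (gradMat φ (projα x), b (projα x))).comp
      (h3.prodMk_nhds tendsto_const_nhds)

/-- Along the ansatz the thin-film functional is bounded by the integral treated in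
`energy_recov`. -/
lemma Feps_recov_le {ω : Set (Euc 2)} (hω : IsOpen ω) (hωb : Bornology.IsBounded ω)
    (hne : ω.Nonempty) {p : Euc 3 → ℝ} (hp : IsPb (thinDomain ω) p)
    {f : Euc 2 → ℝ → ℝ → Mat 3 3 → ℝ} {g : Euc 2 → ℝ × ℝ × Mat 3 3 → ℝ}
    (hgf : ∀ᵐ x ∂volume.restrict ω, ∀ y q ξ, |y| ≤ 1/4 → 1 ≤ q → g x (y, q, ξ) = f x y q ξ)
    {φ b : Euc 2 → Euc 3} (hφ : ContDiff ℝ 1 φ) (hb : ContDiff ℝ 1 b)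
    (hφc : HasCompactSupport φ) (hbc : HasCompactSupport b) (hφω : tsupport φ ⊆ ω)
    (hbω : tsupport b ⊆ ω) {ε : ℝ} (h0 : 0 < ε) (h1 : ε ≤ 1/2) :
    Feps ω p f ε (recov ε φ b) ≤ ∫⁻ x in thinDomain ω, ENNReal.ofReal (g (projα x)
        (ε * x 2, p (scaleX ε x),
          joinCols (gradMat φ (projα x) + (ε * x 2) • gradMat b (projα x))
            (fun i => b (projα x) i))) := by
  have hadm : SobAdm ω p ε (recov ε φ b) (gradMat (recov ε φ b)) := by
    refine sobAdm_of_smooth hω hωb hne hp h0 (by linarith) (contDiff_recov ε hφ hb)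
      (hφc.isCompact.union hbc.isCompact) (union_subset hφω hbω) fun x hx => ?_
    rw [mem_union, not_or] at hx
    simp [recov, image_eq_zero_of_notMem_tsupport hx.1, image_eq_zero_of_notMem_tsupport hx.2]
  refine (iInf₂_le _ hadm).trans (lintegral_mono_ae ?_)
  obtain ⟨pm, pM, hpm, hpb⟩ := hp.2
  have hmp := measurePreserving_projα hω.measurableSet
  filter_upwards [hmp.quasiMeasurePreserving.ae hgf, ae_scaleX hω hpb h0 (by linarith),
    ae_restrict_mem (isOpen_thinDomain hω).measurableSet] with x hx hx1 hxω
  rw [scaleCol_gradMat_recov h0.ne' hφ hb, hx _ _ _ ?_ (by linarith [hx1.1])]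
  -- For `ε ≤ 1/2` the point `ε x₃` lies in the range `|y| ≤ 1/4` where `g = f`.
  obtain ⟨-, h3, h4⟩ := hxω
  rw [abs_le]
  constructor <;> nlinarith

/-- The ansatz stays as close to `u` in the modular as `φ` is to `v`, up to a constant factor. -/
lemma modular_recov {ω : Set (Euc 2)} (hω : IsOpen ω) (hωb : Bornology.IsBounded ω)
    {q : Euc 2 → ℝ} {Q : ℝ} (hqm : Measurable q) (hq1 : ∀ x ∈ ω, 1 ≤ q x)
    (hqQ : ∀ x ∈ ω, q x ≤ Q) {v : Euc 2 → Euc 3}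
    (hv : AEStronglyMeasurable v (volume.restrict ω)) {u : Euc 3 → Euc 3}
    (huv : ∀ᵐ x ∂volume.restrict (thinDomain ω), u x = v (projα x))
    {εs : ℕ → ℝ} (hεpos : ∀ k, 0 < εs k) (hεs : Tendsto εs atTop (𝓝 0))
    {φ b : Euc 2 → Euc 3} (hφ : Continuous φ) (hb : Continuous b) {δ : ℝ≥0∞}
    (hδ : ∫⁻ x in ω, ENNReal.ofReal (‖φ x - v x‖ ^ q x) < δ) :
    ∀ᶠ k in atTop, ∫⁻ x in thinDomain ω,
      ENNReal.ofReal (‖recov (εs k) φ b x - u x‖ ^ q (projα x)) ≤ ENNReal.ofReal (2 ^ Q) * δ := by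
  obtain ⟨M, hM0, hM⟩ := exists_bound_on hωb hb
  have hfin := (isBounded_thinDomain hωb).measure_lt_top (μ := volume)
  have hmp := measurePreserving_projα hω.measurableSet
  have hF : AEMeasurable (fun x => ENNReal.ofReal (‖φ x - v x‖ ^ q x)) (volume.restrict ω) := by
    have := hv.aemeasurable
    have := hφ.measurable
    fun_prop
  have hFi : ∫⁻ x in thinDomain ω, ENNReal.ofReal (‖φ (projα x) - v (projα x)‖ ^ q (projα x)) =
      ∫⁻ x in ω, ENNReal.ofReal (‖φ x - v x‖ ^ q x) := by
    rw [← hmp.map_eq] at hF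
    conv_rhs => rw [← hmp.map_eq]
    exact (lintegral_map' hF continuous_projα.aemeasurable).symm
  have hbd : ∀ k, εs k ≤ 1 → ∫⁻ x in thinDomain ω,
      ENNReal.ofReal (‖recov (εs k) φ b x - u x‖ ^ q (projα x)) ≤ ENNReal.ofReal (2 ^ Q) *
        ((∫⁻ x in ω, ENNReal.ofReal (‖φ x - v x‖ ^ q x)) +
          ENNReal.ofReal (εs k * (1 + M) ^ Q) * volume (thinDomain ω)) := by
    intro k hk
    have e0 := hεpos k
    rw [← hFi, ← setLIntegral_const, ← lintegral_add_right _ measurable_const,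
      ← lintegral_const_mul' _ _ ENNReal.ofReal_ne_top]
    refine lintegral_mono_ae ?_
    filter_upwards [huv, ae_restrict_mem (isOpen_thinDomain hω).measurableSet] with x hx hxω
    have q1 := hq1 _ hxω.1
    have q2 := hqQ _ hxω.1
    rw [← ENNReal.ofReal_add (by positivity) (by positivity), ← ENNReal.ofReal_mul (by positivity)]
    refine ENNReal.ofReal_le_ofReal ?_
    have h1 : ‖recov (εs k) φ b x - u x‖ ≤ ‖φ (projα x) - v (projα x)‖ + εs k * M := by
      rw [hx, recov, add_sub_right_comm]
      refine (norm_add_le _ _).trans (add_le_add_right ?_ _)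
      rw [norm_smul]
      refine mul_le_mul ?_ (hM _ hxω.1) (norm_nonneg _) e0.le
      obtain ⟨-, h3, h4⟩ := hxω
      rw [Real.norm_eq_abs, abs_le]
      constructor <;> nlinarith
    refine (Real.rpow_le_rpow (norm_nonneg _) h1 (by linarith)).trans ?_
    refine (add_rpow_le_const (norm_nonneg _) (by positivity) (by linarith) q2).trans ?_
    refine mul_le_mul_of_nonneg_left (add_le_add_right ?_ _) (by positivity)
    rw [Real.mul_rpow e0.le hM0]
    refine mul_le_mul ?_ (rpow_le_one_add_pow hM0 le_rfl (by linarith) q2) (by positivity) e0.le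
    simpa using Real.rpow_le_rpow_of_exponent_ge e0 hk q1
  have hT : Tendsto (fun k => (∫⁻ x in ω, ENNReal.ofReal (‖φ x - v x‖ ^ q x)) +
          ENNReal.ofReal (εs k * (1 + M) ^ Q) * volume (thinDomain ω)) atTop
      (𝓝 (∫⁻ x in ω, ENNReal.ofReal (‖φ x - v x‖ ^ q x))) := by
    have h1 : Tendsto (fun k => ENNReal.ofReal (εs k * (1 + M) ^ Q)) atTop (𝓝 0) := by
      have := (ENNReal.continuous_ofReal.tendsto _).comp (hεs.mul_const ((1 + M) ^ Q))
      simpa [Function.comp_def] using this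
    have h2 := ENNReal.Tendsto.mul_const (b := volume (thinDomain ω)) h1 (Or.inr hfin.ne)
    simpa using h2.const_add (∫⁻ x in ω, ENNReal.ofReal (‖φ x - v x‖ ^ q x))
  filter_upwards [hεs.eventually_le_const one_pos, hT.eventually_lt_const hδ] with k h1 h2
  exact (hbd k h1).trans (by gcongr)

/-! ### The limsup inequality -/

/-- Proposition `Gammlisup`: `Γ(L^{p₀(·)})`-limsup inequality in the
convex case: recovery sequences converging in `L^{p₀(·)}(Ω;ℝ³)`. -/
theorem statement13 (ω : Set (Euc 2)) (hω : IsOpen ω) (hωb : Bornology.IsBounded ω)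
    (hωc : IsConnected ω) (hωL : HasLipschitzBoundary ω)
    (f : Euc 2 → ℝ → ℝ → Mat 3 3 → ℝ)
    (hfnn : ∀ xα y q ξ, 0 ≤ f xα y q ξ)
    (hfcont : ∀ᵐ xα ∂(volume.restrict ω),
      ContinuousOn (fun t : ℝ × ℝ × Mat 3 3 => f xα t.1 t.2.1 t.2.2)
        ((Set.Ioo (-(1/2):ℝ) (1/2)) ×ˢ ((Set.Ici (1:ℝ)) ×ˢ (Set.univ : Set (Mat 3 3)))))
    (hfmeas : ∀ (y q : ℝ) (ξ : Mat 3 3), Measurable fun xα => f xα y q ξ)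
    (C₁ C₂ : ℝ) (hC₁ : 0 < C₁) (hC₁₂ : C₁ ≤ C₂)
    (hgrowth : ∀ᵐ xα ∂(volume.restrict ω), ∀ y ∈ Set.Ioo (-(1/2):ℝ) (1/2),
      ∀ q ∈ Set.Ici (1:ℝ), ∀ ξ : Mat 3 3,
        C₁ * mnorm ξ ^ q - 1 / C₁ ≤ f xα y q ξ ∧ f xα y q ξ ≤ C₂ * (mnorm ξ ^ q + 1))
    (p : Euc 3 → ℝ) (hp : IsPb (thinDomain ω) p)
    (εs : ℕ → ℝ) (hεpos : ∀ k, 0 < εs k) (hεs : Tendsto εs atTop (nhds (0:ℝ)))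
    (p₀ : Euc 2 → ℝ) (hp₀ : IsPbLog ω p₀)
    (hpconv : TendstoL1 (thinDomain ω)
      (fun k x => p (scaleX (εs k) x)) (fun x => p₀ (projα x))) :
    ∀ u : Euc 3 → Euc 3, ∃ us : ℕ → Euc 3 → Euc 3,
      TendstoModular (thinDomain ω) (fun x => p₀ (projα x)) us u ∧
      Filter.limsup (fun k => Feps ω p f (εs k) (us k)) atTop ≤
        limFun ω p₀ (fun xα ξα => finf f xα 0 (p₀ xα) ξα) u := by
  intro u
  have hC₂ : 0 ≤ C₂ := hC₁.le.trans hC₁₂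
  have hne : ω.Nonempty := hωc.nonempty
  have hqm : Measurable p₀ := hp₀.1.1
  obtain ⟨pm, pM, hpm, hpb⟩ := hp₀.bounds hω
  have hq1 : ∀ x ∈ ω, 1 ≤ p₀ x := fun x hx => by linarith [(hpb x hx).1]
  have hqQ : ∀ x ∈ ω, p₀ x ≤ pM := fun x hx => (hpb x hx).2
  have hQ : 0 ≤ pM := by
    obtain ⟨x, hx⟩ := hne
    linarith [hq1 x hx, hqQ x hx]
  obtain ⟨g, hgc, hgm, -, hgle, hgf⟩ := exists_caratheodory hfnn hfcont hfmeas hC₂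
    (hgrowth.mono fun x h y hy q hq ξ => (h y hy q hq ξ).2)
  set L := limFun ω p₀ (fun xα ξα => finf f xα 0 (p₀ xα) ξα) u with hL
  -- If `L = ⊤` the constant sequence works; its modular distance to `u` is `0` because `0 ^ q = 0`
  -- for `q > 0`.
  rcases eq_or_ne L ⊤ with hLt | hLt
  · refine ⟨fun _ => u, ?_, hLt ▸ le_top⟩
    refine tendsto_const_nhds.congr fun k => ?_
    rw [eq_comm, setLIntegral_congr_fun (g := fun _ => 0) (isOpen_thinDomain hω).measurableSet,
      lintegral_zero]
    intro x hx
    simp [Real.zero_rpow (by linarith [hq1 _ hx.1] : p₀ (projα x) ≠ 0)]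
  have hpos : ∀ N : ℕ, (0 : ℝ≥0∞) < (N + 1 : ℝ≥0∞)⁻¹ := fun N =>
    ENNReal.inv_pos.2 (by finiteness)
  obtain ⟨us, hus⟩ := exists_diagonal
    (fun N k (w : Euc 3 → Euc 3) =>
      ∫⁻ x in thinDomain ω, ENNReal.ofReal (‖w x - u x‖ ^ p₀ (projα x)) ≤ (N + 1 : ℝ≥0∞)⁻¹ ∧
        Feps ω p f (εs k) w ≤ L + (N + 1 : ℝ≥0∞)⁻¹)
    (fun N M k w hMN h => by
      have : (N + 1 : ℝ≥0∞)⁻¹ ≤ (M + 1 : ℝ≥0∞)⁻¹ := by gcongr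
      exact ⟨h.1.trans this, h.2.trans (by gcongr)⟩)
    (fun N => by
      have h1 : L < L + (N + 1 : ℝ≥0∞)⁻¹ := ENNReal.lt_add_right hLt (hpos N).ne'
      nth_rewrite 1 [hL] at h1
      simp only [limFun, iInf_lt_iff] at h1
      obtain ⟨v, Gv, ⟨hv, huv⟩, hc⟩ := h1
      have hK : (0 : ℝ≥0∞) < ENNReal.ofReal (2 ^ pM) := by
        rw [ENNReal.ofReal_pos]; positivity
      obtain ⟨φ, b, ⟨hφ, hφc, hφω⟩, ⟨hb, hbc, hbω⟩, hm, he⟩ := exists_planar_approx hω hωb hQ hqm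
        hq1 hqQ hp₀.2 hv hC₂ hgc hgm hgle hgf hc
        -- `2 ^ pM` is the constant lost in `modular_recov`.
        (δ := (N + 1 : ℝ≥0∞)⁻¹ / ENNReal.ofReal (2 ^ pM))
        (ENNReal.div_pos (hpos N).ne' ENNReal.ofReal_ne_top)
      have hφ1 : ContDiff ℝ 1 φ := hφ.of_le (by exact_mod_cast le_top)
      have hb1 : ContDiff ℝ 1 b := hb.of_le (by exact_mod_cast le_top)
      refine ⟨fun k => recov (εs k) φ b, ?_⟩
      filter_upwards [modular_recov hω hωb hqm hq1 hqQ hv.1.1 huv hεpos hεs hφ.continuous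
          hb.continuous hm,
        (energy_recov hω hωb hp hqm hεpos hεs hpconv hC₂ hgc hgm hgle hφ1 hb1).eventually_lt_const
          he, hεs.eventually_le_const (by norm_num : (0 : ℝ) < 1 / 2)] with k h2 h3 h4
      refine ⟨h2.trans ?_, (Feps_recov_le hω hωb hne hp hgf hφ1 hb1 hφc hbc hφω hbω
        (hεpos k) h4).trans h3.le⟩
      rw [ENNReal.mul_div_cancel hK.ne' ENNReal.ofReal_ne_top])
  have hlim0 : Tendsto (fun N : ℕ => (N + 1 : ℝ≥0∞)⁻¹) atTop (𝓝 0) := by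
    have := (tendsto_add_atTop_iff_nat 1).2 ENNReal.tendsto_inv_nat_nhds_zero
    simpa using this
  refine ⟨us, ?_, ?_⟩
  · refine ENNReal.tendsto_nhds_zero.2 fun ε hε => ?_
    obtain ⟨N, hN⟩ := (hlim0.eventually_lt_const hε).exists
    exact (hus N).mono fun k hk => hk.1.trans hN.le
  · have h1 : Tendsto (fun N : ℕ => L + (N + 1 : ℝ≥0∞)⁻¹) atTop (𝓝 L) := by
      simpa using hlim0.const_add L
    refine ge_of_tendsto' h1 fun N => ?_
    exact limsup_le_of_le (h := (hus N).mono fun k hk => hk.2)
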